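/- Let ν be a probability measure on ℝ with ν({0}) = 0 and ∫ |x| ν(dx) < ∞. If T ≥ 0 is a stopping time with respect to the filtration (σ(B_s : s ≤ t))_{t≥0} which is an unbiased shift of B embedding ν, then E₀[T^{1/4}] = ∞. -/

import Mathlib

open MeasureTheory ProbabilityTheory

/-- A two-sided standard Brownian motion: a.s. continuous paths, `B₀ = 0`, independent
increments, and `B_t − B_s` centered Gaussian with variance `t − s` for `s < t`. -/
structure IsTwoSidedBM {Ω : Type*} [MeasurableSpace Ω] (P : Measure Ω) (B : ℝ → Ω → ℝ) :
    Prop where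
  aemeas : ∀ t : ℝ, AEMeasurable (B t) P
  cont : ∀ᵐ ω ∂P, Continuous fun t => B t ω
  zero : ∀ᵐ ω ∂P, B 0 ω = 0
  indepIncr : ∀ (n : ℕ) (t : Fin (n + 1) → ℝ), Monotone t →
    iIndepFun
      (fun (i : Fin n) ω => B (t i.succ) ω - B (t i.castSucc) ω) P
  gaussIncr : ∀ s t : ℝ, s < t →
    Measure.map (fun ω => B t ω - B s ω) P = gaussianReal 0 (Real.toNNReal (t - s))

/-- A random time: a measurable function of the path of `B`. -/
def IsRandomTime {Ω : Type*} [MeasurableSpace Ω] (B : ℝ → Ω → ℝ) (T : Ω → ℝ) : Prop :=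
  @Measurable Ω ℝ (MeasurableSpace.comap (fun ω (t : ℝ) => B t ω) inferInstance) _ T

/-- An unbiased shift: a random time `T` such that `(B_{T+t} − B_T)_{t∈ℝ}` is a two-sided
Brownian motion independent of `B_T`. -/
def IsUnbiasedShift {Ω : Type*} [MeasurableSpace Ω] (P : Measure Ω) (B : ℝ → Ω → ℝ)
    (T : Ω → ℝ) : Prop :=
  IsRandomTime B T ∧
  IsTwoSidedBM P (fun t ω => B (T ω + t) ω - B (T ω) ω) ∧
  IndepFun (fun ω (t : ℝ) => B (T ω + t) ω - B (T ω) ω) (fun ω => B (T ω) ω) P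

/-- `T` embeds the distribution `ν`: `B_T` has law `ν`. -/
def Embeds {Ω : Type*} [MeasurableSpace Ω] (P : Measure Ω) (B : ℝ → Ω → ℝ) (T : Ω → ℝ)
    (ν : Measure ℝ) : Prop :=
  Measure.map (fun ω => B (T ω) ω) P = ν

/-- A stopping time with respect to the filtration `(σ(B_s : s ≤ t))_{t ≥ 0}`. -/
def IsBMStoppingTime {Ω : Type*} [MeasurableSpace Ω] (B : ℝ → Ω → ℝ) (T : Ω → ℝ) : Prop :=
  ∀ t : ℝ, 0 ≤ t →
    MeasurableSet[⨆ s ∈ Set.Iic t, MeasurableSpace.comap (B s) inferInstance] {ω | T ω ≤ t}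

/-!
Start the path from Lebesgue measure instead of `0`: the resulting infinite measure is invariant
under time shifts, and an unbiased shift `T` embedding `ν` transports mass along the flow. With
`h = f - f ∗ ν` and `A = ∫₀ᵗ h(B_r) dr`, transporting by `T` cancels the bulk of `∫ A Φ` for every
bounded `Φ`, leaving only the mass crossing the ends of `[0, t]`, so that
`|∫ A Φ| ≤ const · ‖Φ‖_∞ · E[min(|T|, t)]`. On the other hand, `h(B_0)` and `h(B_u)` have
covariance `‖P_{u/2} h‖² ≥ 0`, where `P` is the heat semigroup, so `∫ A² ≥ c t` as soon as `h ≠ 0`.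
If moreover `f` is the second derivative of `U = √(1 + y²)`, then `h` is the second derivative of
the bounded function `U - U ∗ ν`, which keeps its potentials `∫₀ᵉ P_r h dr` bounded and gives
`∫ A⁴ ≤ M t^(3/2)`. Testing with `Φ = εA / (1 + (εA)²)` and `ε` of order `t^(-1/4)` yields
`E[min(|T|, t)] ≥ κ t^(3/4)` for large `t`, which is incompatible with `E[|T|^(1/4)] < ∞` by
dominated convergence.
-/

open scoped NNReal ENNReal

section PathSpace

/-- Paths are continuous functions `ℝ → ℝ`, with the `σ`-algebra generated by the evaluations. -/
instance pathMeasurableSpace : MeasurableSpace C(ℝ, ℝ) := .comap (⇑) inferInstance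

lemma measurable_coe_path : Measurable ((⇑) : C(ℝ, ℝ) → ℝ → ℝ) :=
  comap_measurable _

@[fun_prop]
lemma measurable_path_apply (t : ℝ) : Measurable fun w : C(ℝ, ℝ) => w t :=
  (measurable_pi_apply t).comp measurable_coe_path

lemma measurable_path_iff {α : Type*} [MeasurableSpace α] {X : α → C(ℝ, ℝ)} :
    Measurable X ↔ ∀ t, Measurable fun a => X a t :=
  measurable_comap_iff.trans measurable_pi_iff

@[fun_prop]
lemma measurable_path_eval {α : Type*} [MeasurableSpace α] {X : α → C(ℝ, ℝ)} {r : α → ℝ}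
    (hX : Measurable X) (hr : Measurable r) : Measurable fun a => X a (r a) :=
  (measurable_uncurry_of_continuous_of_measurable (u := fun (t : ℝ) (w : C(ℝ, ℝ)) => w t)
    (fun w => w.continuous) measurable_path_apply).comp (hr.prodMk hX)

lemma measurable_path_of_rat {α : Type*} [MeasurableSpace α] {X : α → C(ℝ, ℝ)}
    (hX : ∀ q : ℚ, Measurable fun a => X a q) : Measurable X := by
  refine measurable_path_iff.2 fun t => ?_
  obtain ⟨q, -, -, hq⟩ := Real.exists_seq_rat_strictMono_tendsto t
  refine measurable_of_tendsto_metrizable (fun n => hX (q n)) (tendsto_pi_nhds.2 fun a => ?_)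
  exact ((X a).continuous.tendsto t).comp hq

instance : MeasurableSpace.CountablyGenerated C(ℝ, ℝ) := by
  let restrictRat (w : C(ℝ, ℝ)) (q : ℚ) : ℝ := w q
  have h : pathMeasurableSpace = .comap restrictRat inferInstance := by
    refine le_antisymm ?_ (Measurable.comap_le (by fun_prop))
    have hid := @measurable_path_of_rat _ (.comap restrictRat inferInstance) id fun q =>
      (measurable_pi_apply q).comp (comap_measurable restrictRat)
    simpa using measurable_iff_comap_le.1 hid
  exact h ▸ .comap restrictRat

theorem exists_measurable_path_version {Ω : Type*} [MeasurableSpace Ω] {P : Measure Ω}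
    {B : ℝ → Ω → ℝ} (hB : ∀ t, AEMeasurable (B t) P) (hc : ∀ᵐ ω ∂P, Continuous fun t => B t ω) :
    ∃ X : Ω → C(ℝ, ℝ), Measurable X ∧ ∀ᵐ ω ∂P, ∀ t, X ω t = B t ω := by
  classical
  let X (ω : Ω) : C(ℝ, ℝ) := if h : Continuous fun t => B t ω then ⟨fun t => B t ω, h⟩ else 0
  have hXB : ∀ᵐ ω ∂P, ∀ t, X ω t = B t ω := by
    filter_upwards [hc] with ω h t
    simp [X, h]
  have hX : NullMeasurable X P := by
    refine (measurable_path_iff (α := NullMeasurableSpace Ω P)).2 fun t => ?_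
    exact ((hB t).congr (hXB.mono fun ω h => (h t).symm)).nullMeasurable
  refine ⟨_, hX.aemeasurable.measurable_mk, ?_⟩
  filter_upwards [hXB, hX.aemeasurable.ae_eq_mk] with ω h hmk t
  rw [← hmk, h]

lemma path_measure_ext {μ μ' : Measure C(ℝ, ℝ)}
    (h : μ.map (⇑) = μ'.map ((⇑) : C(ℝ, ℝ) → ℝ → ℝ)) : μ = μ' := by
  refine Measure.ext fun s ⟨t, ht, hts⟩ => ?_
  rw [← hts, ← Measure.map_apply measurable_coe_path ht, h,
    Measure.map_apply measurable_coe_path ht]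

end PathSpace

section BrownianMotion

variable {Ω Ω' : Type*} [MeasurableSpace Ω] [MeasurableSpace Ω'] {P : Measure Ω} {P' : Measure Ω'}
  {B : ℝ → Ω → ℝ} {B' : ℝ → Ω' → ℝ}

namespace IsTwoSidedBM

lemma isProbabilityMeasure (hB : IsTwoSidedBM P B) : IsProbabilityMeasure P :=
  (hB.indepIncr 0 0 monotone_const).isProbabilityMeasure

lemma map_sub (hB : IsTwoSidedBM P B) {s t : ℝ} (hst : s ≤ t) :
    P.map (fun ω => B t ω - B s ω) = gaussianReal 0 (t - s).toNNReal := by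
  have := hB.isProbabilityMeasure
  rcases hst.eq_or_lt with rfl | h
  · simp
  · exact hB.gaussIncr s t h

lemma isPreBrownianReal (hB : IsTwoSidedBM P B) (a : ℝ) :
    IsPreBrownianReal (fun (t : ℝ≥0) ω => B (a + t) ω - B a ω) P := by
  refine HasIndepIncrements.isPreBrownianReal_of_hasLaw (fun t => ⟨?_, ?_⟩) fun n t ht => ?_
  · exact (hB.aemeas _).sub (hB.aemeas _)
  · simpa using hB.map_sub (le_add_of_nonneg_right t.coe_nonneg : a ≤ a + t)
  · simpa using hB.indepIncr n (fun i => a + t i) fun i j hij => by simpa using ht hij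

theorem map_restrict_eq (hB : IsTwoSidedBM P B) (hB' : IsTwoSidedBM P' B') (I : Finset ℝ) :
    P.map (fun ω => I.restrict (B · ω)) = P'.map (fun ω => I.restrict (B' · ω)) := by
  obtain ⟨a, ha⟩ : ∃ a, ∀ t ∈ insert 0 I, a ≤ t := (insert 0 I).bddBelow
  let J : Finset ℝ≥0 := (insert 0 I).image fun t => (t - a).toNNReal
  have hJ (t : ℝ) (ht : t ∈ insert 0 I) : (t - a).toNNReal ∈ J := Finset.mem_image_of_mem _ ht
  let g (d : J → ℝ) (t : I) : ℝ :=
    d ⟨_, hJ t (Finset.mem_insert_of_mem t.2)⟩ - d ⟨_, hJ 0 (Finset.mem_insert_self 0 I)⟩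
  have hg (f : ℝ → ℝ) (hf : f 0 = 0) :
      g (J.restrict fun t : ℝ≥0 => f (a + t) - f a) = I.restrict f := by
    ext t
    have hat := ha t (Finset.mem_insert_of_mem t.2)
    have ha0 := ha 0 (Finset.mem_insert_self 0 I)
    simp [g, hf, Real.coe_toNNReal _ (sub_nonneg.2 hat), max_eq_left (neg_nonneg.2 ha0)]
  have hlaw := (((hB.isPreBrownianReal a).hasLaw J).identDistrib
    ((hB'.isPreBrownianReal a).hasLaw J)).comp (u := g) (by fun_prop)
  rw [← Measure.map_congr (hB.zero.mono fun ω h => hg (B · ω) h),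
    ← Measure.map_congr (hB'.zero.mono fun ω h => hg (B' · ω) h)]
  exact hlaw.map_eq

theorem map_path_eq {X : Ω → C(ℝ, ℝ)} {Y : Ω' → C(ℝ, ℝ)} (hX : Measurable X) (hY : Measurable Y)
    (hBX : IsTwoSidedBM P fun t ω => X ω t) (hBY : IsTwoSidedBM P' fun t ω => Y ω t) :
    P.map X = P'.map Y := by
  have := hBY.isProbabilityMeasure
  refine path_measure_ext ?_
  rw [Measure.map_map measurable_coe_path hX, Measure.map_map measurable_coe_path hY]
  have hX' := isProjectiveLimit_map (P := P) (X := fun t ω => X ω t)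
    (measurable_coe_path.comp hX).aemeasurable
  simp_rw [hBX.map_restrict_eq hBY] at hX'
  exact hX'.unique (isProjectiveLimit_map (measurable_coe_path.comp hY).aemeasurable)

lemma congr (hB : IsTwoSidedBM P B) {C : ℝ → Ω → ℝ} (h : ∀ᵐ ω ∂P, ∀ t, B t ω = C t ω) :
    IsTwoSidedBM P C where
  aemeas t := (hB.aemeas t).congr (h.mono fun ω hω => hω t)
  cont := by
    filter_upwards [hB.cont, h] with ω hc hω
    simpa [hω] using hc
  zero := by
    filter_upwards [hB.zero, h] with ω h0 hω
    rw [← hω, h0]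
  indepIncr n t ht := (hB.indepIncr n t ht).congr fun i => h.mono fun ω hω => by simp [hω]
  gaussIncr s t hst := by
    rw [← hB.gaussIncr s t hst]
    exact Measure.map_congr (h.mono fun ω hω => by simp [hω])

lemma shift (hB : IsTwoSidedBM P B) (r : ℝ) : IsTwoSidedBM P fun t ω => B (r + t) ω - B r ω where
  aemeas t := (hB.aemeas _).sub (hB.aemeas _)
  cont := hB.cont.mono fun ω h => by fun_prop
  zero := by simp
  indepIncr n t ht := by
    simpa using hB.indepIncr n (fun i => r + t i) fun i j hij => by simpa using ht hij
  gaussIncr s t hst := by simpa using hB.gaussIncr (r + s) (r + t) (by linarith)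

lemma map_path {X : Ω → C(ℝ, ℝ)} (hX : Measurable X) (hB : IsTwoSidedBM P fun t ω => X ω t) :
    IsTwoSidedBM (P.map X) fun t w => w t where
  aemeas t := (measurable_path_apply t).aemeasurable
  cont := .of_forall fun w => w.continuous
  zero := (ae_map_iff hX.aemeasurable (by measurability)).2 hB.zero
  indepIncr n t ht := by
    have := hB.isProbabilityMeasure
    have := Measure.isProbabilityMeasure_map (μ := P) hX.aemeasurable
    have h := (iIndepFun_iff_map_fun_eq_pi_map (by fun_prop)).1 (hB.indepIncr n t ht)
    rw [iIndepFun_iff_map_fun_eq_pi_map (by fun_prop), Measure.map_map (by fun_prop) hX]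
    refine h.trans (congrArg Measure.pi (funext fun i => ?_))
    exact (Measure.map_map (g := fun w : C(ℝ, ℝ) => w (t i.succ) - w (t i.castSucc))
      (by fun_prop) hX).symm
  gaussIncr s t hst := by
    rw [Measure.map_map (by fun_prop) hX]
    exact hB.gaussIncr s t hst

end IsTwoSidedBM

end BrownianMotion

section Shift

/-- The time shift `(θᵣ w)(t) = w(r + t)`. -/
def timeShift (r : ℝ) (w : C(ℝ, ℝ)) : C(ℝ, ℝ) := w.comp ⟨fun t => r + t, by fun_prop⟩

@[simp]
lemma timeShift_apply (r : ℝ) (w : C(ℝ, ℝ)) (t : ℝ) : timeShift r w t = w (r + t) := rfl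

lemma timeShift_timeShift (r s : ℝ) (w : C(ℝ, ℝ)) :
    timeShift r (timeShift s w) = timeShift (s + r) w := by
  ext t
  simp [add_assoc]

lemma timeShift_zero (w : C(ℝ, ℝ)) : timeShift 0 w = w := by
  ext t
  simp

/-- The path `t ↦ w(r + t) - w(r)` of increments of `w` from time `r` on. -/
def incrementPath (r : ℝ) (w : C(ℝ, ℝ)) : C(ℝ, ℝ) := timeShift r w - .const ℝ (w r)

@[simp]
lemma incrementPath_apply (r : ℝ) (w : C(ℝ, ℝ)) (t : ℝ) :
    incrementPath r w t = w (r + t) - w r := rfl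

/-- The path `y + w` for a pair `(w, y)`. -/
def startAt (p : C(ℝ, ℝ) × ℝ) : C(ℝ, ℝ) := .const ℝ p.2 + p.1

@[simp]
lemma startAt_apply (p : C(ℝ, ℝ) × ℝ) (t : ℝ) : startAt p t = p.2 + p.1 t := rfl

lemma startAt_incrementPath (r : ℝ) (p : C(ℝ, ℝ) × ℝ) :
    startAt (incrementPath r p.1, p.2 + p.1 r) = timeShift r (startAt p) := by
  ext t
  simp only [startAt_apply, incrementPath_apply, timeShift_apply]
  ring

variable {α : Type*} [MeasurableSpace α]

@[fun_prop]
lemma measurable_timeShift {r : α → ℝ} {X : α → C(ℝ, ℝ)} (hr : Measurable r) (hX : Measurable X) :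
    Measurable fun a => timeShift (r a) (X a) :=
  measurable_path_iff.2 fun t => by simp only [timeShift_apply]; fun_prop

@[fun_prop]
lemma measurable_incrementPath {r : α → ℝ} {X : α → C(ℝ, ℝ)} (hr : Measurable r)
    (hX : Measurable X) : Measurable fun a => incrementPath (r a) (X a) :=
  measurable_path_iff.2 fun t => by simp only [incrementPath_apply]; fun_prop

@[fun_prop]
lemma measurable_startAt : Measurable startAt :=
  measurable_path_iff.2 fun t => by simp only [startAt_apply]; fun_prop

end Shift

section LebesgueStart

variable {μ : Measure C(ℝ, ℝ)}

lemma IsTwoSidedBM.measurePreserving_incrementPath (hμ : IsTwoSidedBM μ fun t w => w t) (r : ℝ) :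
    MeasurePreserving (incrementPath r) μ μ where
  measurable := by fun_prop
  map_eq := by
    simpa using (hμ.shift r).map_path_eq (X := incrementPath r) (Y := id) (by fun_prop)
      measurable_id hμ

lemma measurePreserving_prod_add {α β : Type*} [MeasurableSpace α] [MeasurableSpace β]
    {μ : Measure α} {ρ : Measure β} [SFinite μ] {g : α → β}
    (hg : MeasurePreserving g μ ρ) {c : α → ℝ} (hc : Measurable c) :
    MeasurePreserving (fun p : α × ℝ => (g p.1, p.2 + c p.1)) (μ.prod volume) (ρ.prod volume) :=
  hg.skew_product (by fun_prop) (.of_forall fun a => map_add_right_eq_self volume (c a))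

/-- The infinite measure under which the path is a Brownian motion of law `μ` translated by an
independent starting point distributed according to Lebesgue measure. -/
noncomputable def lebesgueStart (μ : Measure C(ℝ, ℝ)) : Measure C(ℝ, ℝ) :=
  (μ.prod volume).map startAt

instance [SFinite μ] : SFinite (lebesgueStart μ) := by
  unfold lebesgueStart
  infer_instance

lemma integral_lebesgueStart {F : C(ℝ, ℝ) → ℝ} (hF : Measurable F) :
    ∫ w, F w ∂lebesgueStart μ = ∫ p, F (startAt p) ∂μ.prod volume :=
  integral_map measurable_startAt.aemeasurable hF.aestronglyMeasurable

theorem IsTwoSidedBM.measurePreserving_timeShift (hμ : IsTwoSidedBM μ fun t w => w t) (r : ℝ) :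
    MeasurePreserving (timeShift r) (lebesgueStart μ) (lebesgueStart μ) where
  measurable := by fun_prop
  map_eq := by
    have := hμ.isProbabilityMeasure
    have h := measurePreserving_prod_add (hμ.measurePreserving_incrementPath r)
      (measurable_path_apply r)
    rw [lebesgueStart, Measure.map_map (by fun_prop) (by fun_prop)]
    conv_rhs => rw [← h.map_eq, Measure.map_map (by fun_prop) h.measurable]
    simp only [Function.comp_def, startAt_incrementPath]

lemma IsTwoSidedBM.measurePreserving_apply (hμ : IsTwoSidedBM μ fun t w => w t) (r : ℝ) :
    MeasurePreserving (fun w : C(ℝ, ℝ) => w r) (lebesgueStart μ) volume where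
  measurable := by fun_prop
  map_eq := by
    have := hμ.isProbabilityMeasure
    have h := measurePreserving_prod_add (hμ.measurePreserving_incrementPath r)
      (measurable_path_apply r)
    rw [lebesgueStart, Measure.map_map (by fun_prop) (by fun_prop)]
    exact (measurePreserving_snd.comp h).map_eq

end LebesgueStart

section Transport

instance (a b : ℝ) : IsFiniteMeasure (volume.restrict (Set.uIoc a b)) :=
  inferInstanceAs (IsFiniteMeasure (volume.restrict (Set.Ioc _ _)))

lemma abs_integral_sub_comp_sub_le {ψ : ℝ → ℝ} {K : ℝ} (hψ : Measurable ψ)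
    (hK : ∀ r, |ψ r| ≤ K) {t : ℝ} (ht : 0 ≤ t) (a : ℝ) :
    |∫ r in 0..t, (ψ r - ψ (r - a))| ≤ 2 * K * min |a| t := by
  have hi (b c : ℝ) : IntervalIntegrable ψ volume b c :=
    intervalIntegrable_const (c := K) |>.mono_fun hψ.aestronglyMeasurable
      (.of_forall fun r => (hK r).trans (le_abs_self K))
  have hbd (b c : ℝ) : ‖∫ r in b..c, ψ r‖ ≤ K * |c - b| :=
    intervalIntegral.norm_integral_le_of_norm_le_const fun r _ => hK r
  have hK0 : 0 ≤ K := (abs_nonneg _).trans (hK 0)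
  rw [mul_min_of_nonneg _ _ (by positivity), intervalIntegral.integral_sub (hi _ _)
    (by simpa using (hi (0 - a) (t - a)).comp_sub_right a),
    intervalIntegral.integral_comp_sub_right]
  refine le_min ?_ ?_
  · rw [intervalIntegral.integral_interval_sub_interval_comm (hi _ _) (hi _ _) (hi _ _)]
    calc _ ≤ ‖∫ r in 0..0 - a, ψ r‖ + ‖∫ r in t..t - a, ψ r‖ := norm_sub_le _ _
      _ ≤ K * |0 - a - 0| + K * |t - a - t| := add_le_add (hbd _ _) (hbd _ _)
      _ = 2 * K * |a| := by simp; ring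
  · calc _ ≤ ‖∫ r in 0..t, ψ r‖ + ‖∫ r in 0 - a..t - a, ψ r‖ := norm_sub_le _ _
      _ ≤ K * |t - 0| + K * |t - a - (0 - a)| := add_le_add (hbd _ _) (hbd _ _)
      _ = 2 * K * t := by simp [abs_of_nonneg ht]; ring

variable {μ : Measure C(ℝ, ℝ)} {ν : Measure ℝ} {τ : C(ℝ, ℝ) → ℝ} {f : ℝ → ℝ}
  {Φ : C(ℝ, ℝ) → ℝ} {K : ℝ}

lemma integral_comp_apply_mul (hμ : IsTwoSidedBM μ fun t w => w t) (hf : Measurable f)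
    (hΦ : Measurable Φ) (r : ℝ) :
    ∫ w, f (w r) * Φ w ∂lebesgueStart μ
      = ∫ p, f p.2 * Φ (timeShift (-r) (startAt p)) ∂μ.prod volume := by
  have := hμ.isProbabilityMeasure
  have h := measurePreserving_prod_add (hμ.measurePreserving_incrementPath r)
    (measurable_path_apply r)
  let H (p : C(ℝ, ℝ) × ℝ) : ℝ := f p.2 * Φ (timeShift (-r) (startAt p))
  have hH : Measurable H := by fun_prop
  rw [integral_lebesgueStart (by fun_prop), ← h.hasLaw.integral_comp hH.aestronglyMeasurable]
  simp [H, startAt_incrementPath, timeShift_timeShift, timeShift_zero]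

lemma measurePreserving_unbiasedShift [SFinite μ] [SFinite ν] (hτ : Measurable τ)
    (hτμ : μ.map (fun w => (w (τ w), incrementPath (τ w) w)) = ν.prod μ) :
    MeasurePreserving
      (fun p : C(ℝ, ℝ) × ℝ => (p.1 (τ p.1), incrementPath (τ p.1) p.1, p.2 + p.1 (τ p.1)))
      (μ.prod volume) (ν.prod (μ.prod volume)) :=
  (measurePreserving_prodAssoc ν μ volume).comp
    (measurePreserving_prod_add ⟨by fun_prop, hτμ⟩ (c := fun w => w (τ w)) (by fun_prop))

lemma integral_mul_comp_timeShift [IsProbabilityMeasure μ] [SFinite ν] (hτ : Measurable τ)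
    (hτμ : μ.map (fun w => (w (τ w), incrementPath (τ w) w)) = ν.prod μ)
    (hf : Integrable f) (hfm : Measurable f) (hΦ : Measurable Φ) (hK : ∀ w, |Φ w| ≤ K) :
    ∫ p, f p.2 * Φ (timeShift (τ p.1) (startAt p)) ∂μ.prod volume
      = ∫ p, (∫ x, f (p.2 - x) ∂ν) * Φ (startAt p) ∂μ.prod volume := by
  have h := measurePreserving_unbiasedShift hτ hτμ
  let H (q : ℝ × C(ℝ, ℝ) × ℝ) : ℝ := f (q.2.2 - q.1) * Φ (startAt q.2)
  have hH : Measurable H := by fun_prop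
  have hHS (p : C(ℝ, ℝ) × ℝ) : H (p.1 (τ p.1), incrementPath (τ p.1) p.1, p.2 + p.1 (τ p.1))
      = f p.2 * Φ (timeShift (τ p.1) (startAt p)) := by
    simp [H, startAt_incrementPath]
  have hHi : Integrable H (ν.prod (μ.prod volume)) := by
    refine (h.integrable_comp hH.aestronglyMeasurable).1 ?_
    simp only [Function.comp_def, hHS]
    exact (hf.comp_snd μ).mul_bdd (c := K) (Measurable.aestronglyMeasurable (by fun_prop))
      (.of_forall fun p => hK _)
  calc _ = ∫ q, H q ∂ν.prod (μ.prod volume) := by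
        rw [← h.hasLaw.integral_comp hH.aestronglyMeasurable]
        simp only [Function.comp_def, hHS]
    _ = ∫ p, ∫ x, f (p.2 - x) * Φ (startAt p) ∂ν ∂μ.prod volume := integral_prod_symm _ hHi
    _ = _ := by simp_rw [integral_mul_const]

/-- The difference `f - f ∗ ν` between a density `f` and its image under an independent step
of law `ν`. -/
noncomputable def convDefect (ν : Measure ℝ) (f : ℝ → ℝ) (y : ℝ) : ℝ := f y - ∫ x, f (y - x) ∂ν

lemma measurable_convDefect [SFinite ν] (hf : Measurable f) : Measurable (convDefect ν f) := by
  have h : Measurable fun p : ℝ × ℝ => f (p.1 - p.2) := by fun_prop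
  exact hf.sub h.stronglyMeasurable.integral_prod_right'.measurable

lemma integrable_conv [IsFiniteMeasure ν] (hf : Integrable f) :
    Integrable fun y => ∫ x, f (y - x) ∂ν := by
  have h := measurePreserving_prod_add (MeasurePreserving.id ν) (measurable_id.neg)
  exact ((h.integrable_comp hf.aestronglyMeasurable.comp_snd).2 (hf.comp_snd ν)).integral_prod_right

lemma integrable_convDefect [IsFiniteMeasure ν] (hf : Integrable f) : Integrable (convDefect ν f) :=
  hf.sub (integrable_conv hf)

theorem integral_convDefect_mul (hμ : IsTwoSidedBM μ fun t w => w t) [IsProbabilityMeasure ν]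
    (hτ : Measurable τ) (hτμ : μ.map (fun w => (w (τ w), incrementPath (τ w) w)) = ν.prod μ)
    (hf : Integrable f) (hfm : Measurable f) (hΦ : Measurable Φ) (hK : ∀ w, |Φ w| ≤ K) (r : ℝ) :
    ∫ w, convDefect ν f (w r) * Φ w ∂lebesgueStart μ
      = ∫ p, f p.2 * (Φ (timeShift (-r) (startAt p)) - Φ (timeShift (τ p.1 - r) (startAt p)))
        ∂μ.prod volume := by
  have := hμ.isProbabilityMeasure
  have hi {g : ℝ → ℝ} (hg : Integrable g) {s : C(ℝ, ℝ) → ℝ} (hs : Measurable s) :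
      Integrable (fun p => g p.2 * Φ (timeShift (s p.1) (startAt p))) (μ.prod volume) :=
    (hg.comp_snd μ).mul_bdd (c := K) (Measurable.aestronglyMeasurable (by fun_prop))
      (.of_forall fun p => hK _)
  have hshift := integral_mul_comp_timeShift hτ hτμ hf hfm
    (Φ := fun w => Φ (timeShift (-r) w)) (by fun_prop) fun w => hK _
  simp only [timeShift_timeShift, ← sub_eq_add_neg] at hshift
  rw [integral_comp_apply_mul hμ (measurable_convDefect hfm) hΦ]
  simp only [convDefect, sub_mul, mul_sub]
  rw [integral_sub (hi hf measurable_const) (hi (integrable_conv hf) measurable_const),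
    integral_sub (hi hf measurable_const) (hi hf (hτ.sub_const r)), hshift]

/-- The additive functional `∫ₐᵇ h(w(r)) dr` of the path `w`. -/
noncomputable def additiveFunctional (h : ℝ → ℝ) (a b : ℝ) (w : C(ℝ, ℝ)) : ℝ :=
  ∫ r in a..b, h (w r)

variable {h : ℝ → ℝ}

@[fun_prop]
lemma measurable_additiveFunctional {α : Type*} [MeasurableSpace α] {a b : α → ℝ}
    {X : α → C(ℝ, ℝ)} (hh : Measurable h) (ha : Measurable a) (hb : Measurable b)
    (hX : Measurable X) : Measurable fun x => additiveFunctional h (a x) (b x) (X x) := by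
  have hset {a b : α → ℝ} (ha : Measurable a) (hb : Measurable b) :
      Measurable fun x => ∫ r in Set.Ioc (a x) (b x), h (X x r) := by
    have hs : MeasurableSet {p : α × ℝ | p.2 ∈ Set.Ioc (a p.1) (b p.1)} :=
      (measurableSet_lt (ha.comp measurable_fst) measurable_snd).inter
        (measurableSet_le measurable_snd (hb.comp measurable_fst))
    have hm : Measurable fun p : α × ℝ => h (X p.1 p.2) := by fun_prop
    simp_rw [← integral_indicator measurableSet_Ioc]
    exact (hm.indicator hs).stronglyMeasurable.integral_prod_right'.measurable
  exact (hset ha hb).sub (hset hb ha)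

lemma integrable_comp_apply_prod (hμ : IsTwoSidedBM μ fun t w => w t) (hh : Integrable h)
    (a b : ℝ) : Integrable (fun q : ℝ × C(ℝ, ℝ) => h (q.2 q.1))
      ((volume.restrict (Set.uIoc a b)).prod (lebesgueStart μ)) := by
  have := hμ.isProbabilityMeasure
  have hpres := (MeasurePreserving.id (volume.restrict (Set.uIoc a b))).skew_product
    (g := fun r (w : C(ℝ, ℝ)) => w r) (by fun_prop)
    (.of_forall fun r => (hμ.measurePreserving_apply r).map_eq)
  exact (hpres.integrable_comp hh.aestronglyMeasurable.comp_snd).2 (hh.comp_snd _)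

lemma integral_intervalIntegral_apply_mul (hμ : IsTwoSidedBM μ fun t w => w t)
    (hh : Integrable h) {Φ : ℝ → C(ℝ, ℝ) → ℝ} (hΦ : Measurable (Function.uncurry Φ)) {a b : ℝ}
    (hK : ∀ r ∈ Set.uIoc a b, ∀ w, |Φ r w| ≤ K) :
    ∫ w, (∫ r in a..b, h (w r) * Φ r w) ∂lebesgueStart μ
      = ∫ r in a..b, ∫ w, h (w r) * Φ r w ∂lebesgueStart μ := by
  have := hμ.isProbabilityMeasure
  refine (intervalIntegral_integral_swap ?_).symm
  refine (integrable_comp_apply_prod hμ hh a b).mul_bdd (c := K) hΦ.aestronglyMeasurable ?_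
  filter_upwards [Measure.quasiMeasurePreserving_fst.ae (ae_restrict_mem measurableSet_uIoc)]
    with q hq using hK q.1 hq q.2

theorem integral_additiveFunctional_convDefect_mul (hμ : IsTwoSidedBM μ fun t w => w t)
    [IsProbabilityMeasure ν] (hτ : Measurable τ)
    (hτμ : μ.map (fun w => (w (τ w), incrementPath (τ w) w)) = ν.prod μ)
    (hf : Integrable f) (hfm : Measurable f) (hΦ : Measurable Φ) (hK : ∀ w, |Φ w| ≤ K) (t : ℝ) :
    ∫ w, additiveFunctional (convDefect ν f) 0 t w * Φ w ∂lebesgueStart μ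
      = ∫ p, f p.2 * (∫ r in 0..t,
          (Φ (timeShift (-r) (startAt p)) - Φ (timeShift (τ p.1 - r) (startAt p))))
        ∂μ.prod volume := by
  have := hμ.isProbabilityMeasure
  let D (r : ℝ) (p : C(ℝ, ℝ) × ℝ) : ℝ :=
    Φ (timeShift (-r) (startAt p)) - Φ (timeShift (τ p.1 - r) (startAt p))
  have hD : Measurable (Function.uncurry D) := by
    unfold Function.uncurry D
    fun_prop
  have hfD : Integrable (Function.uncurry fun r p => f p.2 * D r p)
      ((volume.restrict (Set.uIoc 0 t)).prod (μ.prod volume)) :=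
    ((hf.comp_snd μ).comp_snd _).mul_bdd (c := K + K) hD.aestronglyMeasurable
      (.of_forall fun q => (abs_sub _ _).trans (add_le_add (hK _) (hK _)))
  have hswap := integral_intervalIntegral_apply_mul hμ (integrable_convDefect (ν := ν) hf)
    (Φ := fun _ => Φ) (hΦ.comp measurable_snd) (a := 0) (b := t) fun r _ => hK
  simp_rw [additiveFunctional, ← intervalIntegral.integral_mul_const, hswap,
    integral_convDefect_mul hμ hτ hτμ hf hfm hΦ hK, ← intervalIntegral.integral_const_mul]
  exact intervalIntegral_integral_swap hfD

theorem abs_integral_additiveFunctional_mul_le (hμ : IsTwoSidedBM μ fun t w => w t)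
    [IsProbabilityMeasure ν] (hτ : Measurable τ)
    (hτμ : μ.map (fun w => (w (τ w), incrementPath (τ w) w)) = ν.prod μ)
    (hf : Integrable f) (hfm : Measurable f) (hΦ : Measurable Φ) (hK : ∀ w, |Φ w| ≤ K)
    {t : ℝ} (ht : 0 ≤ t) :
    |∫ w, additiveFunctional (convDefect ν f) 0 t w * Φ w ∂lebesgueStart μ|
      ≤ 2 * K * (∫ y, |f y|) * ∫ w, min |τ w| t ∂μ := by
  have := hμ.isProbabilityMeasure
  have hmin : Integrable (fun w => min |τ w| t) μ :=
    .of_bound (hτ.abs.min measurable_const).aestronglyMeasurable t (.of_forall fun w => by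
      rw [Real.norm_of_nonneg (by positivity)]
      exact min_le_right _ _)
  rw [integral_additiveFunctional_convDefect_mul hμ hτ hτμ hf hfm hΦ hK, ← Real.norm_eq_abs]
  calc _ ≤ ∫ p, (2 * K * min |τ p.1| t) * |f p.2| ∂μ.prod volume := by
        refine norm_integral_le_of_norm_le ((hmin.const_mul (2 * K)).mul_prod hf.abs)
          (.of_forall fun p => ?_)
        rw [norm_mul, mul_comm]
        refine mul_le_mul_of_nonneg_right ?_ (norm_nonneg _)
        simpa [neg_sub] using abs_integral_sub_comp_sub_le
          (ψ := fun r => Φ (timeShift (-r) (startAt p))) (by fun_prop) (fun r => hK _) ht (τ p.1)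
    _ = 2 * K * (∫ y, |f y|) * ∫ w, min |τ w| t ∂μ := by
        rw [integral_prod_mul (fun w => 2 * K * min |τ w| t) fun y => |f y|, integral_const_mul]
        ring

end Transport

section HeatSemigroup

/-- The heat semigroup `Pᵣh(y) = E[h(y + √r Z)]`, `Z` a standard Gaussian, extended to `r < 0` by
`Pᵣh = h`. -/
noncomputable def heatSemigroup (r : ℝ) (h : ℝ → ℝ) (y : ℝ) : ℝ :=
  ∫ z, h (y + √r * z) ∂gaussianReal 0 1

variable {h : ℝ → ℝ} {C : ℝ}

lemma continuous_heatSemigroup (hh : Continuous h) (hC : ∀ y, |h y| ≤ C) :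
    Continuous fun p : ℝ × ℝ => heatSemigroup p.1 h p.2 :=
  continuous_of_dominated (bound := fun _ => C)
    (fun p => Continuous.aestronglyMeasurable (by fun_prop)) (fun p => .of_forall fun z => hC _)
    (integrable_const C) (.of_forall fun z => by fun_prop)

lemma abs_heatSemigroup_le (hC : ∀ y, |h y| ≤ C) (r y : ℝ) : |heatSemigroup r h y| ≤ C := by
  simpa [heatSemigroup] using norm_integral_le_of_norm_le_const (μ := gaussianReal 0 1)
    (f := fun z => h (y + √r * z)) (.of_forall fun z => hC _)

lemma heatSemigroup_zero (h : ℝ → ℝ) : heatSemigroup 0 h = h := by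
  ext y
  simp [heatSemigroup]

lemma heatSemigroup_eq_integral (hh : Measurable h) (r y : ℝ) :
    heatSemigroup r h y = ∫ z, h (y + z) ∂gaussianReal 0 r.toNNReal := by
  have hlaw : (gaussianReal 0 1).map (√r * ·) = gaussianReal 0 r.toNNReal := by
    rw [gaussianReal_map_const_mul]
    congr 1
    · simp
    · ext
      rcases le_total 0 r with hr | hr <;> simp [hr, Real.sqrt_eq_zero_of_nonpos]
  rw [← hlaw, integral_map (by fun_prop) (Measurable.aestronglyMeasurable (by fun_prop))]
  rfl

lemma abs_heatSemigroup_le_integral (hh : Measurable h) (hi : Integrable h) {r : ℝ} (hr : 0 < r)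
    (y : ℝ) : |heatSemigroup r h y| ≤ (√(2 * Real.pi * r))⁻¹ * ∫ x, |h x| := by
  have hpdf (z : ℝ) : gaussianPDFReal 0 r.toNNReal z ≤ (√(2 * Real.pi * r))⁻¹ := by
    rw [gaussianPDFReal, Real.coe_toNNReal _ hr.le]
    refine mul_le_of_le_one_right (by positivity) (Real.exp_le_one_iff.2 ?_)
    rw [neg_div]
    exact neg_nonpos.2 (by positivity)
  rw [heatSemigroup_eq_integral hh,
    integral_gaussianReal_eq_integral_smul (Real.toNNReal_pos.2 hr).ne', ← Real.norm_eq_abs,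
    ← integral_const_mul, ← integral_add_left_eq_self (fun x => _ * |h x|) y]
  refine norm_integral_le_of_norm_le ((hi.abs.comp_add_left y).const_mul _) (.of_forall fun z => ?_)
  rw [norm_smul, Real.norm_of_nonneg (gaussianPDFReal_nonneg _ _ _)]
  exact mul_le_mul_of_nonneg_right (hpdf z) (abs_nonneg _)

lemma hasDerivAt_gaussianPDFReal (z : ℝ) :
    HasDerivAt (gaussianPDFReal 0 1) (-(z * gaussianPDFReal 0 1 z)) z := by
  have hpdf : gaussianPDFReal 0 1 = fun z => (√(2 * Real.pi))⁻¹ * Real.exp (-z ^ 2 / 2) := by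
    ext z
    simp [gaussianPDFReal]
  have h := ((hasDerivAt_pow 2 z).fun_neg.div_const 2).exp.const_mul (√(2 * Real.pi))⁻¹
  rw [hpdf]
  exact h.congr_deriv (by push_cast; ring)

lemma integrable_gaussianReal_iff {u : ℝ → ℝ} :
    Integrable u (gaussianReal 0 1) ↔ Integrable fun z => gaussianPDFReal 0 1 z * u z := by
  rw [gaussianReal_of_var_ne_zero 0 one_ne_zero, gaussianPDF_def,
    integrable_withDensity_iff_integrable_smul' (by fun_prop) (by simp)]
  simp [ENNReal.toReal_ofReal (gaussianPDFReal_nonneg _ _ _)]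

theorem integral_mul_id_gaussianReal {u u' : ℝ → ℝ} (hu : ∀ z, HasDerivAt u (u' z) z)
    (hi : Integrable u (gaussianReal 0 1)) (hi' : Integrable u' (gaussianReal 0 1))
    (hid : Integrable (fun z => u z * z) (gaussianReal 0 1)) :
    ∫ z, u z * z ∂gaussianReal 0 1 = ∫ z, u' z ∂gaussianReal 0 1 := by
  rw [integrable_gaussianReal_iff] at hi hi' hid
  have h := integral_mul_deriv_eq_deriv_mul_of_integrable (fun z _ => hasDerivAt_gaussianPDFReal z)
    (fun z _ => hu z) hi' (hid.neg.congr (.of_forall fun z => by simp; ring)) hi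
  simp only [integral_gaussianReal_eq_integral_smul one_ne_zero, smul_eq_mul]
  rw [h, ← integral_neg]
  congr 1 with z
  ring

lemma integrable_id_gaussianReal : Integrable (fun z => z) (gaussianReal 0 1) :=
  (memLp_id_gaussianReal 1).integrable le_rfl

lemma integral_comp_add_mul_gaussianReal {u u' : ℝ → ℝ} (hu : ∀ z, HasDerivAt u (u' z) z)
    (huC : ∀ z, |u z| ≤ C) (hu'C : ∀ z, |u' z| ≤ C) (hu' : Continuous u') (y s : ℝ) :
    ∫ z, u (y + s * z) * z ∂gaussianReal 0 1 = s * ∫ z, u' (y + s * z) ∂gaussianReal 0 1 := by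
  have huc : Continuous u := continuous_iff_continuousAt.2 fun z => (hu z).continuousAt
  rw [← integral_const_mul]
  refine integral_mul_id_gaussianReal (u := fun z => u (y + s * z)) (fun z => ?_) ?_ ?_ ?_
  · simpa [Function.comp_def, mul_comm] using
      (hu (y + s * z)).comp z (((hasDerivAt_id z).const_mul s).const_add y)
  · exact .of_bound (Continuous.aestronglyMeasurable (by fun_prop)) C (.of_forall fun z => huC _)
  · exact (Integrable.of_bound (Continuous.aestronglyMeasurable (by fun_prop)) C
      (.of_forall fun z => hu'C _)).const_mul s
  · exact integrable_id_gaussianReal.bdd_mul (c := C)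
      (Continuous.aestronglyMeasurable (by fun_prop)) (.of_forall fun z => huC _)

variable {G G' G'' : ℝ → ℝ}

theorem integral_heatSemigroup_deriv2 (hG : ∀ y, HasDerivAt G (G' y) y)
    (hG' : ∀ y, HasDerivAt G' (G'' y) y) (hGC : ∀ y, |G y| ≤ C) (hG'C : ∀ y, |G' y| ≤ C)
    (hG''c : Continuous G'') (hG''C : ∀ y, |G'' y| ≤ C) {t : ℝ} (ht : 0 ≤ t) (y : ℝ) :
    ∫ r in 0..t, heatSemigroup r G'' y = 2 * (heatSemigroup t G y - G y) := by
  have hGc : Continuous G := continuous_iff_continuousAt.2 fun z => (hG z).continuousAt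
  have hG'c : Continuous G' := continuous_iff_continuousAt.2 fun z => (hG' z).continuousAt
  have hPc : Continuous fun r => heatSemigroup r G'' y :=
    (continuous_heatSemigroup hG''c hG''C).comp (Continuous.prodMk_left y)
  have hi : Integrable (Function.uncurry fun s z : ℝ => G' (y + s * z) * z)
      ((volume.restrict (Set.uIoc 0 √t)).prod (gaussianReal 0 1)) :=
    (integrable_id_gaussianReal.comp_snd _).bdd_mul (c := C)
      (Continuous.aestronglyMeasurable (by fun_prop)) (.of_forall fun q => hG'C _)
  calc ∫ r in 0..t, heatSemigroup r G'' y
      = ∫ s in 0..√t, heatSemigroup (s ^ 2) G'' y * (2 * s) := by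
        have h := intervalIntegral.integral_comp_mul_deriv (a := 0) (b := √t)
          (f := fun s => s ^ 2) (f' := fun s => 2 * s)
          (fun s _ => by simpa using hasDerivAt_pow 2 s) (by fun_prop) hPc
        simpa [Real.sq_sqrt ht] using h.symm
    _ = ∫ s in 0..√t, 2 * ∫ z, G' (y + s * z) * z ∂gaussianReal 0 1 := by
        refine intervalIntegral.integral_congr fun s hs => ?_
        rw [Set.uIcc_of_le (Real.sqrt_nonneg t)] at hs
        simp only [heatSemigroup, Real.sqrt_sq hs.1]
        rw [integral_comp_add_mul_gaussianReal hG' hG'C hG''C hG''c]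
        ring
    _ = 2 * ∫ z, (∫ s in 0..√t, G' (y + s * z) * z) ∂gaussianReal 0 1 := by
        rw [intervalIntegral.integral_const_mul, intervalIntegral_integral_swap hi]
    _ = 2 * ∫ z, (G (y + √t * z) - G y) ∂gaussianReal 0 1 := by
        congr 2 with z
        rw [intervalIntegral.integral_eq_sub_of_hasDerivAt (f := fun s => G (y + s * z))]
        · simp
        · intro s _
          simpa [Function.comp_def] using
            (hG (y + s * z)).comp s (((hasDerivAt_id s).mul_const z).const_add y)
        · exact Continuous.intervalIntegrable (by fun_prop) _ _
    _ = 2 * (heatSemigroup t G y - G y) := by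
        rw [integral_sub _ (integrable_const _)]
        · simp [heatSemigroup]
        · exact .of_bound (Continuous.aestronglyMeasurable (by fun_prop)) C
            (.of_forall fun z => hGC _)

end HeatSemigroup

section Markov

/-- The path `w` before time `0`, continued by the constant `w(0)`. -/
def pastPath (w : C(ℝ, ℝ)) : C(ℝ, ℝ) := w.comp ⟨fun t => min t 0, by fun_prop⟩

@[simp]
lemma pastPath_apply (w : C(ℝ, ℝ)) (t : ℝ) : pastPath w t = w (min t 0) := rfl

/-- The path `w` after time `0`, continued by the constant `w(0)`. -/
def futurePath (w : C(ℝ, ℝ)) : C(ℝ, ℝ) := w.comp ⟨fun t => max t 0, by fun_prop⟩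

@[simp]
lemma futurePath_apply (w : C(ℝ, ℝ)) (t : ℝ) : futurePath w t = w (max t 0) := rfl

lemma pastPath_startAt (w : C(ℝ, ℝ)) (y : ℝ) :
    pastPath (startAt (w, y)) = startAt (pastPath w, y) := rfl

lemma futurePath_startAt (w : C(ℝ, ℝ)) (y : ℝ) :
    futurePath (startAt (w, y)) = startAt (futurePath w, y) := rfl

@[fun_prop]
lemma measurable_pastPath : Measurable pastPath :=
  measurable_path_iff.2 fun t => by simp only [pastPath_apply]; fun_prop

@[fun_prop]
lemma measurable_futurePath : Measurable futurePath :=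
  measurable_path_iff.2 fun t => by simp only [futurePath_apply]; fun_prop

variable {μ : Measure C(ℝ, ℝ)}

theorem IsTwoSidedBM.indepFun_pastPath_futurePath (hμ : IsTwoSidedBM μ fun t w => w t) :
    IndepFun pastPath futurePath μ := by
  have := hμ.isProbabilityMeasure
  suffices h : IndepFun (fun w t => pastPath w t) (fun w t => futurePath w t) μ by
    rw [IndepFun_iff_Indep] at h ⊢
    simpa only [pathMeasurableSpace, MeasurableSpace.comap_comp, Function.comp_def] using! h
  refine IndepFun.process_indepFun_process (fun t => by fun_prop) (fun t => by fun_prop)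
    fun I J => ?_
  obtain ⟨a, ha⟩ : ∃ a, ∀ t ∈ insert 0 I, a ≤ t := (insert 0 I).bddBelow
  have ha0 : a ≤ 0 := ha 0 (Finset.mem_insert_self 0 I)
  have haI (i : I) : a ≤ i := ha i (Finset.mem_insert_of_mem i.2)
  let t₀ : ℝ≥0 := (-a).toNNReal
  have ht₀ : (t₀ : ℝ) = -a := Real.coe_toNNReal _ (neg_nonneg.2 ha0)
  have hI (i : I) : (min (i : ℝ) 0 - a).toNNReal ≤ t₀ :=
    Real.toNNReal_le_toNNReal (by linarith [min_le_right (i : ℝ) 0])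
  let past (d : Set.Iic t₀ → ℝ) (i : I) : ℝ := d ⟨_, hI i⟩ - d ⟨t₀, Set.self_mem_Iic⟩
  let future (d : ℝ≥0 → ℝ) (j : J) : ℝ := d (j : ℝ).toNNReal
  have hshift := ((hμ.isPreBrownianReal a).indepFun_shift t₀).symm.comp (φ := past) (ψ := future)
    (by fun_prop) (by fun_prop)
  refine hshift.congr ?_ ?_
  · filter_upwards [hμ.zero] with w hw
    ext i
    have hi : a ≤ min (i : ℝ) 0 := le_min (haI i) ha0
    simp [past, ht₀, hw, Real.coe_toNNReal _ (sub_nonneg.2 hi)]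
  · filter_upwards [hμ.zero] with w hw
    ext j
    simp [future, ht₀, hw]

lemma integral_mul_of_pastPath_of_futurePath (hμ : IsTwoSidedBM μ fun t w => w t)
    {F G : C(ℝ, ℝ) → ℝ} (hF : Measurable F) (hG : Measurable G)
    (hFp : ∀ w, F (pastPath w) = F w) (hGf : ∀ w, G (futurePath w) = G w) :
    ∫ w, F w * G w ∂μ = (∫ w, F w ∂μ) * ∫ w, G w ∂μ := by
  simpa only [hFp, hGf] using hμ.indepFun_pastPath_futurePath.integral_fun_comp_mul_comp
    (f := F) (g := G) measurable_pastPath.aemeasurable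
    measurable_futurePath.aemeasurable hF.aestronglyMeasurable hG.aestronglyMeasurable

lemma IsTwoSidedBM.integral_comp_pastPath_futurePath (hμ : IsTwoSidedBM μ fun t w => w t)
    {H : C(ℝ, ℝ) × C(ℝ, ℝ) → ℝ} (hH : Measurable H)
    (hHi : Integrable (H ∘ Prod.map pastPath futurePath) (μ.prod μ)) :
    ∫ w, H (pastPath w, futurePath w) ∂μ = ∫ v, ∫ w, H (pastPath v, futurePath w) ∂μ ∂μ := by
  have := hμ.isProbabilityMeasure
  have hlaw := (indepFun_iff_map_prod_eq_prod_map_map (by fun_prop) (by fun_prop)).1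
    hμ.indepFun_pastPath_futurePath
  rw [Measure.map_prod_map _ _ (by fun_prop) (by fun_prop)] at hlaw
  rw [← integral_map (φ := fun w => (pastPath w, futurePath w)) (by fun_prop)
    hH.aestronglyMeasurable, hlaw, integral_map (by fun_prop) hH.aestronglyMeasurable]
  exact integral_prod _ hHi

lemma integral_comp_add_apply (hμ : IsTwoSidedBM μ fun t w => w t) {h : ℝ → ℝ} (hh : Measurable h)
    (y t : ℝ) : ∫ w, h (y + w t) ∂μ = heatSemigroup |t| h y := by
  have hlaw : μ.map (fun w => w t) = gaussianReal 0 |t|.toNNReal := by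
    rcases le_total 0 t with ht | ht
    · rw [abs_of_nonneg ht, ← sub_zero t, ← hμ.map_sub ht]
      exact Measure.map_congr (hμ.zero.mono fun w hw => by simp [hw])
    · rw [abs_of_nonpos ht, ← zero_sub t, ← neg_zero (G := ℝ), ← gaussianReal_map_neg,
        neg_zero, ← hμ.map_sub ht, Measure.map_map (by fun_prop) (by fun_prop)]
      exact Measure.map_congr (hμ.zero.mono fun w hw => by simp [hw])
  rw [heatSemigroup_eq_integral hh, ← hlaw, integral_map (measurable_path_apply t).aemeasurable
    (Measurable.aestronglyMeasurable (by fun_prop))]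

theorem integral_apply_mul_comp_timeShift (hμ : IsTwoSidedBM μ fun t w => w t) {a : ℝ → ℝ}
    (ha : Measurable a) {C : ℝ} (haC : ∀ y, |a y| ≤ C) {G : C(ℝ, ℝ) → ℝ} (hG : Measurable G)
    {K : ℝ} (hGK : ∀ w, |G w| ≤ K) (hGf : ∀ w, G (futurePath w) = G w) {d : ℝ} (hd : 0 ≤ d)
    (y : ℝ) :
    ∫ w, a (y + w d) * G (timeShift d (startAt (w, y))) ∂μ
      = heatSemigroup d (fun z => a z * ∫ w, G (startAt (w, z)) ∂μ) y := by
  have := hμ.isProbabilityMeasure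
  have hinc := hμ.measurePreserving_incrementPath d
  let H (p : C(ℝ, ℝ) × C(ℝ, ℝ)) : ℝ := a (y - p.1 (-d)) * G (startAt (p.2, y - p.1 (-d)))
  have hH : Measurable H := by fun_prop
  have hHi : Integrable (H ∘ Prod.map pastPath futurePath) (μ.prod μ) :=
    .of_bound (Measurable.aestronglyMeasurable (by fun_prop)) (C * K) (.of_forall fun p => by
      rw [Function.comp_apply, norm_mul]
      exact mul_le_mul (haC _) (hGK _) (abs_nonneg _) ((abs_nonneg _).trans (haC 0)))
  let b (z : ℝ) : ℝ := a z * ∫ w, G (startAt (w, z)) ∂μ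
  have hb : Measurable b := by
    have hGm : Measurable fun p : ℝ × C(ℝ, ℝ) => G (startAt (p.2, p.1)) := by fun_prop
    exact ha.mul hGm.stronglyMeasurable.integral_prod_right'.measurable
  calc ∫ w, a (y + w d) * G (timeShift d (startAt (w, y))) ∂μ
      = ∫ w, H (pastPath (incrementPath d w), futurePath (incrementPath d w)) ∂μ := by
        refine integral_congr_ae (hμ.zero.mono fun w (hw : w 0 = 0) => ?_)
        simp [H, hd, hw, ← startAt_incrementPath, ← futurePath_startAt, hGf]
    _ = ∫ w, H (pastPath w, futurePath w) ∂μ :=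
        hinc.hasLaw.integral_comp (f := fun w => H (pastPath w, futurePath w))
          (Measurable.aestronglyMeasurable (by fun_prop))
    _ = ∫ w, b (y - w (-d)) ∂μ := by
        rw [hμ.integral_comp_pastPath_futurePath hH hHi]
        simp [H, b, hd, ← futurePath_startAt, hGf, integral_const_mul]
    _ = ∫ w, b (y - incrementPath d w (-d)) ∂μ :=
        (hinc.hasLaw.integral_comp (Measurable.aestronglyMeasurable (by fun_prop))).symm
    _ = ∫ w, b (y + w d) ∂μ := integral_congr_ae
        (hμ.zero.mono fun w (hw : w 0 = 0) => by simp [hw])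
    _ = heatSemigroup d b y := by rw [integral_comp_add_apply hμ hb, abs_of_nonneg hd]

end Markov

section IteratedIntegral

variable {k : ℝ → ℝ}

lemma integral_mul_comp_primitive (hk : Continuous k) {g : ℝ → ℝ} (hg : Continuous g) (t : ℝ) :
    ∫ v in 0..t, k v * g (∫ r in 0..v, k r) = ∫ x in 0..∫ r in 0..t, k r, g x := by
  have h := intervalIntegral.integral_comp_mul_deriv (a := 0) (b := t) (g := g)
    (fun v _ => hk.integral_hasStrictDerivAt 0 v |>.hasDerivAt) hk.continuousOn hg
  simpa [mul_comm] using h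

lemma integral_sq_eq (hk : Continuous k) (t : ℝ) :
    (∫ r in 0..t, k r) ^ 2 = 2 * ∫ u in 0..t, k u * ∫ r in 0..u, k r := by
  rw [integral_mul_comp_primitive hk (g := fun x => x) continuous_id, integral_id]
  ring

lemma integral_pow_four_eq (hk : Continuous k) (t : ℝ) :
    (∫ r in 0..t, k r) ^ 4
      = 12 * ∫ v in 0..t, k v * ((∫ r in v..t, k r) * (∫ r in 0..v, k r) ^ 2) := by
  set a := ∫ r in 0..t, k r with ha
  have hsub (v : ℝ) : ∫ r in v..t, k r = a - ∫ r in 0..v, k r :=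
    (intervalIntegral.integral_interval_sub_left (hk.intervalIntegrable _ _)
      (hk.intervalIntegrable _ _)).symm
  simp_rw [hsub]
  rw [integral_mul_comp_primitive hk (g := fun x => (a - x) * x ^ 2) (by fun_prop), ← ha]
  simp_rw [sub_mul, ← pow_succ']
  rw [intervalIntegral.integral_sub (by simp) (by simp), intervalIntegral.integral_const_mul]
  simp
  ring

end IteratedIntegral

section AdditiveFunctional

variable {μ : Measure C(ℝ, ℝ)} {h : ℝ → ℝ} {C : ℝ}

lemma abs_additiveFunctional_le (hC : ∀ y, |h y| ≤ C) (a b : ℝ) (w : C(ℝ, ℝ)) :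
    |additiveFunctional h a b w| ≤ C * |b - a| := by
  rw [← Real.norm_eq_abs]
  exact intervalIntegral.norm_integral_le_of_norm_le_const fun r _ => hC (w r)

lemma abs_additiveFunctional_le_of_mem (hC : ∀ y, |h y| ≤ C) {a b r : ℝ}
    (hr : r ∈ Set.uIoc a b) (w : C(ℝ, ℝ)) : |additiveFunctional h a r w| ≤ C * |b - a| :=
  (abs_additiveFunctional_le hC a r w).trans (mul_le_mul_of_nonneg_left
    (Set.abs_sub_left_of_mem_uIcc (Set.uIoc_subset_uIcc hr)) ((abs_nonneg _).trans (hC 0)))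

lemma additiveFunctional_timeShift (h : ℝ → ℝ) (a b r : ℝ) (w : C(ℝ, ℝ)) :
    additiveFunctional h a b (timeShift r w) = additiveFunctional h (r + a) (r + b) w :=
  intervalIntegral.integral_comp_add_left (fun s => h (w s)) r

lemma additiveFunctional_pastPath (h : ℝ → ℝ) {a b : ℝ} (ha : a ≤ 0) (hb : b ≤ 0)
    (w : C(ℝ, ℝ)) : additiveFunctional h a b (pastPath w) = additiveFunctional h a b w :=
  intervalIntegral.integral_congr fun r hr => by
    simp [hr.2.trans (sup_le ha hb)]

lemma additiveFunctional_futurePath (h : ℝ → ℝ) {a b : ℝ} (ha : 0 ≤ a) (hb : 0 ≤ b)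
    (w : C(ℝ, ℝ)) : additiveFunctional h a b (futurePath w) = additiveFunctional h a b w :=
  intervalIntegral.integral_congr fun r hr => by
    simp [(le_inf ha hb).trans hr.1]

lemma IsTwoSidedBM.integrable_comp_apply (hμ : IsTwoSidedBM μ fun t w => w t) (hh : Integrable h)
    (r : ℝ) : Integrable (fun w => h (w r)) (lebesgueStart μ) :=
  (hμ.measurePreserving_apply r).integrable_comp_of_integrable hh

lemma integrable_additiveFunctional (hμ : IsTwoSidedBM μ fun t w => w t) (hh : Integrable h)
    (a b : ℝ) : Integrable (additiveFunctional h a b) (lebesgueStart μ) := by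
  have := hμ.isProbabilityMeasure
  have hi := (integrable_comp_apply_prod hμ hh a b).integral_prod_right
  refine (hi.const_mul (if a ≤ b then 1 else -1)).congr (.of_forall fun w => ?_)
  exact (intervalIntegral.intervalIntegral_eq_integral_uIoc _ a b volume).symm

lemma integral_lebesgueStart_eq_integral_integral [SFinite μ] {F : C(ℝ, ℝ) → ℝ}
    (hF : Integrable F (lebesgueStart μ)) :
    ∫ w, F w ∂lebesgueStart μ = ∫ y, ∫ w, F (startAt (w, y)) ∂μ := by
  rw [lebesgueStart, integral_map (by fun_prop) hF.aestronglyMeasurable]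
  exact integral_prod_symm _ ((integrable_map_measure hF.aestronglyMeasurable (by fun_prop)).1 hF)

lemma integral_additiveFunctional_startAt (hμ : IsTwoSidedBM μ fun t w => w t)
    (hh : Measurable h) (hC : ∀ y, |h y| ≤ C) (a b y : ℝ) :
    ∫ w, additiveFunctional h a b (startAt (w, y)) ∂μ
      = ∫ r in a..b, heatSemigroup |r| h y := by
  have := hμ.isProbabilityMeasure
  simp_rw [← integral_comp_add_apply hμ hh]
  refine (intervalIntegral_integral_swap ?_).symm
  exact .of_bound (Measurable.aestronglyMeasurable (by fun_prop)) C (.of_forall fun p => hC _)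

lemma integral_additiveFunctional_startAt_future (hμ : IsTwoSidedBM μ fun t w => w t)
    (hh : Measurable h) (hC : ∀ y, |h y| ≤ C) {t : ℝ} (ht : 0 ≤ t) (y : ℝ) :
    ∫ w, additiveFunctional h 0 t (startAt (w, y)) ∂μ = ∫ r in 0..t, heatSemigroup r h y := by
  rw [integral_additiveFunctional_startAt hμ hh hC]
  refine intervalIntegral.integral_congr fun r hr => ?_
  simp only [abs_of_nonneg ((le_inf le_rfl ht).trans hr.1)]

lemma integral_additiveFunctional_startAt_past (hμ : IsTwoSidedBM μ fun t w => w t)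
    (hh : Measurable h) (hC : ∀ y, |h y| ≤ C) {t : ℝ} (ht : 0 ≤ t) (y : ℝ) :
    ∫ w, additiveFunctional h (-t) 0 (startAt (w, y)) ∂μ = ∫ r in 0..t, heatSemigroup r h y := by
  rw [← integral_additiveFunctional_startAt_future hμ hh hC ht,
    integral_additiveFunctional_startAt hμ hh hC, integral_additiveFunctional_startAt hμ hh hC,
    ← neg_zero, ← intervalIntegral.integral_comp_neg]
  simp

end AdditiveFunctional

section SecondMoment

variable {μ : Measure C(ℝ, ℝ)} {h : ℝ → ℝ} {C : ℝ}

/-- The covariance `∫ h(w(0)) h(w(u))` of `h` along the stationary path under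
`lebesgueStart μ`. -/
noncomputable def autocovariance (μ : Measure C(ℝ, ℝ)) (h : ℝ → ℝ) (u : ℝ) : ℝ :=
  ∫ w, h (w 0) * h (w u) ∂lebesgueStart μ

lemma integrable_apply_mul_apply (hμ : IsTwoSidedBM μ fun t w => w t) (hh : Measurable h)
    (hC : ∀ y, |h y| ≤ C) (hi : Integrable h) (u v : ℝ) :
    Integrable (fun w => h (w u) * h (w v)) (lebesgueStart μ) :=
  (hμ.integrable_comp_apply hi u).mul_bdd (c := C) (Measurable.aestronglyMeasurable (by fun_prop))
    (.of_forall fun w => hC (w v))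

lemma integral_apply_mul_apply (hμ : IsTwoSidedBM μ fun t w => w t) (hh : Measurable h)
    (u v : ℝ) :
    ∫ w, h (w u) * h (w v) ∂lebesgueStart μ = autocovariance μ h (v - u) := by
  have hshift := (hμ.measurePreserving_timeShift u).hasLaw.integral_comp
    (f := fun w => h (w 0) * h (w (v - u))) (Measurable.aestronglyMeasurable (by fun_prop))
  simpa [autocovariance] using hshift

lemma continuous_autocovariance (hμ : IsTwoSidedBM μ fun t w => w t) (hh : Continuous h)
    (hC : ∀ y, |h y| ≤ C) (hi : Integrable h) : Continuous (autocovariance μ h) := by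
  refine continuous_of_dominated (bound := fun w => |h (w 0)| * C)
    (fun u => (integrable_apply_mul_apply hμ hh.measurable hC hi 0 u).aestronglyMeasurable)
    (fun u => .of_forall fun w => ?_) ((hμ.integrable_comp_apply hi 0).abs.mul_const C)
    (.of_forall fun w => by fun_prop)
  rw [norm_mul]
  exact mul_le_mul_of_nonneg_left (hC _) (norm_nonneg _)

lemma autocovariance_eq_integral_sq (hμ : IsTwoSidedBM μ fun t w => w t) (hh : Measurable h)
    (hC : ∀ y, |h y| ≤ C) (hi : Integrable h) {u : ℝ} (hu : 0 ≤ u) :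
    autocovariance μ h u = ∫ y, heatSemigroup (u / 2) h y ^ 2 := by
  have := hμ.isProbabilityMeasure
  have hu' : 0 ≤ u / 2 := by positivity
  have hsplit (y : ℝ) := integral_mul_of_pastPath_of_futurePath hμ
    (F := fun w => h (y + w (-(u / 2)))) (G := fun w => h (y + w (u / 2))) (by fun_prop)
    (by fun_prop) (fun w => by simp [hu']) fun w => by simp [hu']
  calc autocovariance μ h u = ∫ w, h (w (-(u / 2))) * h (w (u / 2)) ∂lebesgueStart μ := by
        rw [integral_apply_mul_apply hμ hh, sub_neg_eq_add, add_halves]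
    _ = ∫ y, ∫ w, h (y + w (-(u / 2))) * h (y + w (u / 2)) ∂μ :=
        integral_lebesgueStart_eq_integral_integral (integrable_apply_mul_apply hμ hh hC hi _ _)
    _ = ∫ y, heatSemigroup (u / 2) h y ^ 2 := by
        simp_rw [hsplit, integral_comp_add_apply hμ hh, abs_neg,
          abs_of_nonneg hu', sq]

lemma autocovariance_zero_pos (hμ : IsTwoSidedBM μ fun t w => w t) (hh : Continuous h)
    (hC : ∀ y, |h y| ≤ C) (hi : Integrable h) {y : ℝ} (hy : h y ≠ 0) :
    0 < autocovariance μ h 0 := by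
  rw [autocovariance_eq_integral_sq hμ hh.measurable hC hi le_rfl, zero_div, heatSemigroup_zero]
  refine integral_pos_of_integrable_nonneg_nonzero (x := y) (by fun_prop) ?_
    (fun y => sq_nonneg _) (pow_ne_zero 2 hy)
  simpa [sq] using hi.mul_bdd hh.aestronglyMeasurable (.of_forall hC)

theorem integral_additiveFunctional_sq (hμ : IsTwoSidedBM μ fun t w => w t) (hh : Continuous h)
    (hC : ∀ y, |h y| ≤ C) (hi : Integrable h) (t : ℝ) :
    ∫ w, additiveFunctional h 0 t w ^ 2 ∂lebesgueStart μ
      = 2 * ∫ v in 0..t, ∫ u in 0..v, autocovariance μ h u := by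
  have hhm := hh.measurable
  have hinner (v : ℝ) : ∫ w, h (w v) * additiveFunctional h 0 v w ∂lebesgueStart μ
      = ∫ u in 0..v, autocovariance μ h u := by
    have hswap := integral_intervalIntegral_apply_mul hμ hi (Φ := fun _ w => h (w v))
      (a := 0) (b := v) (by fun_prop) fun u _ w => hC (w v)
    simp_rw [integral_apply_mul_apply hμ hhm, intervalIntegral.integral_mul_const] at hswap
    simpa [additiveFunctional, mul_comm] using hswap
  have hswap := integral_intervalIntegral_apply_mul hμ hi
    (Φ := fun v w => additiveFunctional h 0 v w) (a := 0) (b := t)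
    (by unfold Function.uncurry; fun_prop) fun v hv => abs_additiveFunctional_le_of_mem hC hv
  simp_rw [hinner] at hswap
  rw [← hswap, ← integral_const_mul]
  exact integral_congr_ae (.of_forall fun w => integral_sq_eq (by fun_prop) t)

theorem exists_mul_le_integral_additiveFunctional_sq (hμ : IsTwoSidedBM μ fun t w => w t)
    (hh : Continuous h) (hC : ∀ y, |h y| ≤ C) (hi : Integrable h) {y : ℝ} (hy : h y ≠ 0) :
    ∃ c > 0, ∀ t ≥ 2, c * t ≤ ∫ w, additiveFunctional h 0 t w ^ 2 ∂lebesgueStart μ := by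
  have hκ := continuous_autocovariance hμ hh hC hi
  have hκi (a b : ℝ) := hκ.intervalIntegrable (μ := volume) a b
  have hκ0 {u : ℝ} (hu : 0 ≤ u) : 0 ≤ autocovariance μ h u := by
    rw [autocovariance_eq_integral_sq hμ hh.measurable hC hi hu]
    positivity
  set c := ∫ u in 0..1, autocovariance μ h u
  have hJ : Continuous fun v => ∫ u in 0..v, autocovariance μ h u :=
    intervalIntegral.continuous_primitive hκi 0
  have hJ0 {v : ℝ} (hv : 0 ≤ v) : 0 ≤ ∫ u in 0..v, autocovariance μ h u :=
    intervalIntegral.integral_nonneg hv fun u hu => hκ0 hu.1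
  have hcJ {v : ℝ} (hv : 1 ≤ v) : c ≤ ∫ u in 0..v, autocovariance μ h u := by
    rw [← intervalIntegral.integral_add_adjacent_intervals (hκi 0 1) (hκi 1 v)]
    exact le_add_of_nonneg_right
      (intervalIntegral.integral_nonneg hv fun u hu => hκ0 (zero_le_one.trans hu.1))
  have hcpos : 0 < c := intervalIntegral.integral_pos zero_lt_one hκ.continuousOn
    (fun u hu => hκ0 hu.1.le) ⟨0, by simp, autocovariance_zero_pos hμ hh hC hi hy⟩
  refine ⟨c, hcpos, fun t ht => ?_⟩
  rw [integral_additiveFunctional_sq hμ hh hC hi]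
  calc c * t ≤ 2 * ∫ _ in 1..t, c := by
        rw [intervalIntegral.integral_const, smul_eq_mul]
        nlinarith
    _ ≤ 2 * ∫ v in 1..t, ∫ u in 0..v, autocovariance μ h u := by
        gcongr
        exact intervalIntegral.integral_mono_on (by linarith) (by simp)
          (hJ.intervalIntegrable _ _) fun v hv => hcJ hv.1
    _ ≤ 2 * ∫ v in 0..t, ∫ u in 0..v, autocovariance μ h u := by
        gcongr
        rw [← intervalIntegral.integral_add_adjacent_intervals (hJ.intervalIntegrable 0 1)
          (hJ.intervalIntegrable 1 t)]
        exact le_add_of_nonneg_left (intervalIntegral.integral_nonneg zero_le_one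
          fun _ hv => hJ0 hv.1)

end SecondMoment

section FourthMoment

variable {μ : Measure C(ℝ, ℝ)} {h : ℝ → ℝ} {C L : ℝ}

lemma integral_additiveFunctional_mul_startAt (hμ : IsTwoSidedBM μ fun t w => w t)
    (hh : Measurable h) (hC : ∀ y, |h y| ≤ C) {u d e : ℝ} (hu : 0 ≤ u) (hd : 0 ≤ d) (he : 0 ≤ e)
    (y : ℝ) :
    ∫ w, additiveFunctional h (-u) 0 (startAt (w, y))
        * (h (y + w d) * additiveFunctional h d (d + e) (startAt (w, y))) ∂μ
      = (∫ r in 0..u, heatSemigroup r h y)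
        * heatSemigroup d (fun z => h z * ∫ r in 0..e, heatSemigroup r h z) y := by
  have hmarkov := integral_apply_mul_comp_timeShift hμ hh hC (G := additiveFunctional h 0 e)
    (by fun_prop) (abs_additiveFunctional_le hC 0 e)
    (additiveFunctional_futurePath h le_rfl he) hd y
  simp_rw [additiveFunctional_timeShift, add_zero,
    integral_additiveFunctional_startAt_future hμ hh hC he] at hmarkov
  rw [← integral_additiveFunctional_startAt_past hμ hh hC hu, ← hmarkov]
  refine integral_mul_of_pastPath_of_futurePath hμ
    (F := fun w => additiveFunctional h (-u) 0 (startAt (w, y)))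
    (G := fun w => h (y + w d) * additiveFunctional h d (d + e) (startAt (w, y)))
    (by fun_prop) (by fun_prop) (fun w => ?_) fun w => ?_
  · rw [← pastPath_startAt, additiveFunctional_pastPath h (neg_nonpos.2 hu) le_rfl]
  · rw [← futurePath_startAt, additiveFunctional_futurePath h hd (add_nonneg hd he)]
    simp [hd]

lemma abs_heatSemigroup_mul_le {V : ℝ → ℝ} (hh : Measurable h) (hi : Integrable h)
    (hV : Measurable V) (hVL : ∀ z, |V z| ≤ L) {r : ℝ} (hr : 0 < r) (y : ℝ) :
    |heatSemigroup r (fun z => h z * V z) y| ≤ (√(2 * Real.pi * r))⁻¹ * ((∫ z, |h z|) * L) := by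
  have hhVi : Integrable fun z => h z * V z := hi.mul_bdd hV.aestronglyMeasurable (.of_forall hVL)
  refine (abs_heatSemigroup_le_integral (hh.mul hV) hhVi hr y).trans ?_
  gcongr
  rw [← integral_mul_const]
  exact integral_mono hhVi.abs (hi.abs.mul_const L) fun z =>
    (abs_mul _ _).trans_le (mul_le_mul_of_nonneg_left (hVL z) (abs_nonneg _))

lemma abs_integral_apply_mul_additiveFunctional_mul_le (hμ : IsTwoSidedBM μ fun t w => w t)
    (hh : Continuous h) (hC : ∀ y, |h y| ≤ C) (hi : Integrable h)
    (hL : ∀ e ≥ 0, ∀ y, |∫ r in 0..e, heatSemigroup r h y| ≤ L) {u v t : ℝ} (hu : 0 ≤ u)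
    (huv : u < v) (hvt : v ≤ t) :
    |∫ w, h (w u) * (additiveFunctional h 0 u w * (h (w v) * additiveFunctional h v t w))
        ∂lebesgueStart μ|
      ≤ L ^ 2 * (∫ y, |h y|) ^ 2 * (√(2 * Real.pi * (v - u)))⁻¹ := by
  have := hμ.isProbabilityMeasure
  have hhm := hh.measurable
  have hd : 0 < v - u := sub_pos.2 huv
  have hC0 : 0 ≤ C := (abs_nonneg _).trans (hC 0)
  have hL0 : 0 ≤ L := (abs_nonneg _).trans (hL 0 le_rfl 0)
  let V (z : ℝ) : ℝ := ∫ r in 0..t - v, heatSemigroup r h z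
  have hVc : Continuous V := intervalIntegral.continuous_parametric_intervalIntegral_of_continuous'
    (f := fun z r => heatSemigroup r h z)
    ((continuous_heatSemigroup hh hC).comp continuous_swap) _ _
  have hheat (y : ℝ) := abs_heatSemigroup_mul_le hhm hi hVc.measurable
    (hL _ (sub_nonneg.2 hvt)) hd y
  let F (w : C(ℝ, ℝ)) : ℝ := h (w 0) * (additiveFunctional h (-u) 0 w
    * (h (w (v - u)) * additiveFunctional h (v - u) (t - u) w))
  have hFi : Integrable F (lebesgueStart μ) := by
    refine (hμ.integrable_comp_apply hi 0).mul_bdd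
      (c := C * |0 - -u| * (C * (C * |t - u - (v - u)|)))
      (Measurable.aestronglyMeasurable (by fun_prop)) (.of_forall fun w => ?_)
    rw [norm_mul, norm_mul]
    gcongr
    exacts [abs_additiveFunctional_le hC _ _ w, hC _, abs_additiveFunctional_le hC _ _ w]
  have hF (y : ℝ) : ∫ w, F (startAt (w, y)) ∂μ
      = h y * ((∫ r in 0..u, heatSemigroup r h y)
        * heatSemigroup (v - u) (fun z => h z * V z) y) := by
    rw [← integral_additiveFunctional_mul_startAt hμ hhm hC hu hd.le (sub_nonneg.2 hvt),
      ← integral_const_mul]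
    exact integral_congr_ae (hμ.zero.mono fun w (hw : w 0 = 0) => by simp [F, hw])
  calc _ = |∫ y, ∫ w, F (startAt (w, y)) ∂μ| := by
        rw [← integral_lebesgueStart_eq_integral_integral hFi,
          ← (hμ.measurePreserving_timeShift u).hasLaw.integral_comp hFi.aestronglyMeasurable]
        simp [F, additiveFunctional_timeShift]
    _ ≤ ∫ y, |h y| * (L * ((√(2 * Real.pi * (v - u)))⁻¹ * ((∫ z, |h z|) * L))) := by
        rw [← Real.norm_eq_abs]
        refine norm_integral_le_of_norm_le (hi.abs.mul_const _) (.of_forall fun y => ?_)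
        rw [hF, norm_mul, norm_mul]
        exact mul_le_mul_of_nonneg_left (mul_le_mul (hL u hu y) (hheat y) (norm_nonneg _) hL0)
          (norm_nonneg _)
    _ = _ := by
        rw [integral_mul_const]
        ring

lemma inv_sqrt_eq_rpow (x : ℝ) : (√x)⁻¹ = x ^ (-(1 / 2) : ℝ) := by
  rcases le_or_gt 0 x with hx | hx
  · rw [Real.sqrt_eq_rpow, Real.rpow_neg hx]
  · rw [Real.sqrt_eq_zero_of_nonpos hx.le, Real.rpow_def_of_neg hx, neg_mul, Real.cos_neg,
      one_div_mul_eq_div, Real.cos_pi_div_two, mul_zero, inv_zero]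

lemma intervalIntegrable_inv_sqrt_sub (v : ℝ) :
    IntervalIntegrable (fun u => (√(v - u))⁻¹) volume 0 v := by
  simp_rw [inv_sqrt_eq_rpow]
  simpa using (intervalIntegral.intervalIntegrable_rpow' (a := v) (b := 0)
    (r := -(1 / 2)) (by norm_num)).comp_sub_left v

lemma integral_inv_sqrt_sub {v : ℝ} : ∫ u in 0..v, (√(v - u))⁻¹ = 2 * √v := by
  rw [intervalIntegral.integral_comp_sub_left (fun x => (√x)⁻¹)]
  simp_rw [inv_sqrt_eq_rpow]
  rw [integral_rpow (.inl (by norm_num))]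
  norm_num [Real.sqrt_eq_rpow]
  ring

lemma abs_integral_apply_mul_additiveFunctional_sq_le (hμ : IsTwoSidedBM μ fun t w => w t)
    (hh : Continuous h) (hC : ∀ y, |h y| ≤ C) (hi : Integrable h)
    (hL : ∀ e ≥ 0, ∀ y, |∫ r in 0..e, heatSemigroup r h y| ≤ L) {v t : ℝ} (hv : 0 ≤ v)
    (hvt : v ≤ t) :
    |∫ w, h (w v) * (additiveFunctional h v t w * additiveFunctional h 0 v w ^ 2)
        ∂lebesgueStart μ|
      ≤ 4 * (L ^ 2 * (∫ y, |h y|) ^ 2) * √v := by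
  have hhm := hh.measurable
  have hC0 : 0 ≤ C := (abs_nonneg _).trans (hC 0)
  let Φ (u : ℝ) (w : C(ℝ, ℝ)) : ℝ :=
    additiveFunctional h 0 u w * (h (w v) * additiveFunctional h v t w)
  have hΦ : Measurable (Function.uncurry Φ) := by
    unfold Function.uncurry Φ
    fun_prop
  have hΦK (u : ℝ) (hu : u ∈ Set.uIoc 0 v) (w : C(ℝ, ℝ)) :
      |Φ u w| ≤ C * |v - 0| * (C * (C * |t - v|)) := by
    rw [abs_mul, abs_mul]
    gcongr
    exacts [abs_additiveFunctional_le_of_mem hC hu w, hC _, abs_additiveFunctional_le hC v t w]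
  have hbound (u : ℝ) (hu : u ∈ Set.Ioc 0 v) (huv : u ≠ v) :
      |∫ w, h (w u) * Φ u w ∂lebesgueStart μ| ≤ L ^ 2 * (∫ y, |h y|) ^ 2 * (√(v - u))⁻¹ := by
    refine (abs_integral_apply_mul_additiveFunctional_mul_le hμ hh hC hi hL hu.1.le
      (hu.2.lt_of_ne huv) hvt).trans ?_
    have hpos : 0 < v - u := sub_pos.2 (hu.2.lt_of_ne huv)
    gcongr
    exact le_mul_of_one_le_left hpos.le (by linarith [Real.two_le_pi])
  have hexpand (w : C(ℝ, ℝ)) :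
      h (w v) * (additiveFunctional h v t w * additiveFunctional h 0 v w ^ 2)
        = 2 * ∫ u in 0..v, h (w u) * Φ u w := by
    simp only [Φ, ← mul_assoc]
    rw [additiveFunctional, additiveFunctional, integral_sq_eq (by fun_prop)]
    simp only [additiveFunctional, intervalIntegral.integral_mul_const]
    ring
  simp_rw [hexpand]
  rw [integral_const_mul, integral_intervalIntegral_apply_mul hμ hi hΦ hΦK, abs_mul, abs_two]
  have hle : ‖∫ u in 0..v, ∫ w, h (w u) * Φ u w ∂lebesgueStart μ‖
      ≤ ∫ u in 0..v, L ^ 2 * (∫ y, |h y|) ^ 2 * (√(v - u))⁻¹ :=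
    intervalIntegral.norm_integral_le_of_norm_le hv
      ((volume.ae_ne v).mono fun u huv hu => hbound u hu huv)
      ((intervalIntegrable_inv_sqrt_sub v).const_mul _)
  rw [intervalIntegral.integral_const_mul, integral_inv_sqrt_sub, Real.norm_eq_abs] at hle
  linarith

theorem integral_additiveFunctional_pow_four_le (hμ : IsTwoSidedBM μ fun t w => w t)
    (hh : Continuous h) (hC : ∀ y, |h y| ≤ C) (hi : Integrable h)
    (hL : ∀ e ≥ 0, ∀ y, |∫ r in 0..e, heatSemigroup r h y| ≤ L) {t : ℝ} (ht : 0 ≤ t) :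
    ∫ w, additiveFunctional h 0 t w ^ 4 ∂lebesgueStart μ
      ≤ 48 * (L ^ 2 * (∫ y, |h y|) ^ 2) * (t * √t) := by
  have hhm := hh.measurable
  have hC0 : 0 ≤ C := (abs_nonneg _).trans (hC 0)
  let Φ (v : ℝ) (w : C(ℝ, ℝ)) : ℝ := additiveFunctional h v t w * additiveFunctional h 0 v w ^ 2
  have hΦ : Measurable (Function.uncurry Φ) := by
    unfold Function.uncurry Φ
    fun_prop
  have hΦK (v : ℝ) (hv : v ∈ Set.uIoc 0 t) (w : C(ℝ, ℝ)) :
      |Φ v w| ≤ C * |t - 0| * (C * |t - 0|) ^ 2 := by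
    rw [abs_mul, abs_pow]
    gcongr
    · exact (abs_additiveFunctional_le hC v t w).trans (mul_le_mul_of_nonneg_left
        (Set.abs_sub_right_of_mem_uIcc (Set.uIoc_subset_uIcc hv)) hC0)
    · exact abs_additiveFunctional_le_of_mem hC hv w
  have hexpand (w : C(ℝ, ℝ)) :
      additiveFunctional h 0 t w ^ 4 = 12 * ∫ v in 0..t, h (w v) * Φ v w :=
    integral_pow_four_eq (by fun_prop) t
  have hle : |∫ v in 0..t, ∫ w, h (w v) * Φ v w ∂lebesgueStart μ|
      ≤ 4 * (L ^ 2 * (∫ y, |h y|) ^ 2) * √t * |t - 0| := by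
    rw [← Real.norm_eq_abs]
    refine intervalIntegral.norm_integral_le_of_norm_le_const fun v hv => ?_
    rw [Set.uIoc_of_le ht] at hv
    refine (abs_integral_apply_mul_additiveFunctional_sq_le hμ hh hC hi hL hv.1.le hv.2).trans ?_
    gcongr
    exact hv.2
  simp_rw [hexpand]
  rw [integral_const_mul, integral_intervalIntegral_apply_mul hμ hi hΦ hΦK]
  rw [sub_zero, abs_of_nonneg ht] at hle
  linarith [le_abs_self (∫ v in 0..t, ∫ w, h (w v) * Φ v w ∂lebesgueStart μ)]

end FourthMoment

section ConvDefect

variable {ν : Measure ℝ} {g g' g'' : ℝ → ℝ} {C : ℝ}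

lemma continuous_convDefect [IsFiniteMeasure ν] (hg : Continuous g) (hC : ∀ y, |g y| ≤ C) :
    Continuous (convDefect ν g) :=
  hg.sub (continuous_of_dominated (bound := fun _ => C)
    (fun y => Continuous.aestronglyMeasurable (by fun_prop)) (fun y => .of_forall fun x => hC _)
    (integrable_const C) (.of_forall fun x => by fun_prop))

lemma abs_convDefect_le [IsProbabilityMeasure ν] (hC : ∀ y, |g y| ≤ C) (y : ℝ) :
    |convDefect ν g y| ≤ 2 * C := by
  have hint : |∫ x, g (y - x) ∂ν| ≤ C := by
    simpa using norm_integral_le_of_norm_le_const (μ := ν) (f := fun x => g (y - x))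
      (.of_forall fun x => hC (y - x))
  rw [convDefect]
  linarith [abs_sub (g y) (∫ x, g (y - x) ∂ν), hC y]

lemma abs_sub_comp_sub_le (hg : ∀ y, HasDerivAt g (g' y) y) (hC : ∀ y, |g' y| ≤ C) (y x : ℝ) :
    |g y - g (y - x)| ≤ C * |x| := by
  simpa using convex_univ.norm_image_sub_le_of_norm_hasDerivWithin_le
    (fun z _ => (hg z).hasDerivWithinAt) (fun z _ => hC z) (Set.mem_univ (y - x)) (Set.mem_univ y)

lemma integrable_comp_sub_left [IsFiniteMeasure ν] (hν : Integrable (fun x => x) ν)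
    (hg : ∀ y, HasDerivAt g (g' y) y) (hC : ∀ y, |g' y| ≤ C) (y : ℝ) :
    Integrable (fun x => g (y - x)) ν := by
  have hgc : Continuous g := continuous_iff_continuousAt.2 fun z => (hg z).continuousAt
  have hsub : Integrable (fun x => g y - g (y - x)) ν :=
    (hν.abs.const_mul C).mono' (Continuous.aestronglyMeasurable (by fun_prop))
      (.of_forall fun x => abs_sub_comp_sub_le hg hC y x)
  simpa [Pi.sub_def] using (integrable_const (g y)).sub hsub

lemma abs_convDefect_le_mul_integral_abs [IsProbabilityMeasure ν]
    (hν : Integrable (fun x => x) ν) (hg : ∀ y, HasDerivAt g (g' y) y) (hC : ∀ y, |g' y| ≤ C)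
    (y : ℝ) : |convDefect ν g y| ≤ C * ∫ x, |x| ∂ν := by
  have hdefect : convDefect ν g y = ∫ x, (g y - g (y - x)) ∂ν := by
    rw [integral_sub (integrable_const _) (integrable_comp_sub_left hν hg hC y)]
    simp [convDefect]
  rw [hdefect, ← integral_const_mul, ← Real.norm_eq_abs]
  exact norm_integral_le_of_norm_le (hν.abs.const_mul C)
    (.of_forall fun x => abs_sub_comp_sub_le hg hC y x)

lemma hasDerivAt_convDefect [IsFiniteMeasure ν] (hν : Integrable (fun x => x) ν)
    (hg : ∀ y, HasDerivAt g (g' y) y) (hC : ∀ y, |g' y| ≤ C) (y : ℝ) :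
    HasDerivAt (convDefect ν g) (convDefect ν g' y) y := by
  have hgc : Continuous g := continuous_iff_continuousAt.2 fun z => (hg z).continuousAt
  have hg'm : Measurable g' := by
    rw [← funext fun z => (hg z).deriv]
    exact measurable_deriv g
  refine (hg y).sub (hasDerivAt_integral_of_dominated_loc_of_deriv_le (bound := fun _ => C)
    Filter.univ_mem (.of_forall fun z => Continuous.aestronglyMeasurable (by fun_prop))
    (integrable_comp_sub_left hν hg hC y) (Measurable.aestronglyMeasurable (by fun_prop))
    (.of_forall fun x z _ => hC _) (integrable_const C)
    (.of_forall fun x z _ => (hg (z - x)).comp_sub_const z x)).2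

theorem exists_abs_integral_heatSemigroup_convDefect_le [IsProbabilityMeasure ν]
    (hν : Integrable (fun x => x) ν) (hg : ∀ y, HasDerivAt g (g' y) y)
    (hg' : ∀ y, HasDerivAt g' (g'' y) y) (hg'' : Continuous g'') (hg'C : ∀ y, |g' y| ≤ C)
    (hg''C : ∀ y, |g'' y| ≤ C) :
    ∃ L, ∀ e ≥ 0, ∀ y, |∫ r in 0..e, heatSemigroup r (convDefect ν g'') y| ≤ L := by
  let K : ℝ := max (C * ∫ x, |x| ∂ν) (2 * C)
  have hK (y : ℝ) : |convDefect ν g y| ≤ K :=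
    (abs_convDefect_le_mul_integral_abs hν hg hg'C y).trans (le_max_left _ _)
  refine ⟨4 * K, fun e he y => ?_⟩
  rw [integral_heatSemigroup_deriv2 (hasDerivAt_convDefect hν hg hg'C)
    (hasDerivAt_convDefect hν hg' hg''C) hK
    (fun y => (abs_convDefect_le hg'C y).trans (le_max_right _ _))
    (continuous_convDefect hg'' hg''C)
    (fun y => (abs_convDefect_le hg''C y).trans (le_max_right _ _)) he, abs_mul, abs_two]
  linarith [abs_sub (heatSemigroup e (convDefect ν g) y) (convDefect ν g y),
    abs_heatSemigroup_le hK e y, hK y]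

end ConvDefect

section Bump

/-- The second derivative of the potential `√(1 + y²)`. -/
noncomputable def bump (y : ℝ) : ℝ := ((1 + y ^ 2) * √(1 + y ^ 2))⁻¹

lemma hasDerivAt_sqrt_one_add_sq (y : ℝ) :
    HasDerivAt (fun y => √(1 + y ^ 2)) (y / √(1 + y ^ 2)) y := by
  refine ((hasDerivAt_pow 2 y).const_add 1).sqrt (by positivity) |>.congr_deriv ?_
  push_cast
  ring

lemma hasDerivAt_div_sqrt_one_add_sq (y : ℝ) :
    HasDerivAt (fun y => y / √(1 + y ^ 2)) (bump y) y := by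
  have hpos : 0 < 1 + y ^ 2 := by positivity
  refine ((hasDerivAt_id y).div (hasDerivAt_sqrt_one_add_sq y)
    (Real.sqrt_ne_zero'.2 hpos)).congr_deriv ?_
  have hs := Real.sq_sqrt hpos.le
  have hs0 : √(1 + y ^ 2) ≠ 0 := Real.sqrt_ne_zero'.2 hpos
  simp only [bump, id]
  field_simp
  rw [hs]
  ring

lemma abs_div_sqrt_one_add_sq_le (y : ℝ) : |y / √(1 + y ^ 2)| ≤ 1 := by
  rw [abs_div, abs_of_nonneg (Real.sqrt_nonneg _)]
  exact div_le_one_of_le₀ (Real.abs_le_sqrt (by linarith)) (Real.sqrt_nonneg _)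

lemma continuous_bump : Continuous bump := by
  unfold bump
  exact Continuous.inv₀ (by fun_prop) fun y => by positivity

lemma bump_pos (y : ℝ) : 0 < bump y := by
  unfold bump
  positivity

lemma bump_zero : bump 0 = 1 := by simp [bump]

lemma bump_le_inv_one_add_sq (y : ℝ) : bump y ≤ (1 + y ^ 2)⁻¹ := by
  unfold bump
  gcongr
  exact le_mul_of_one_le_right (by positivity) (Real.one_le_sqrt.2 (by nlinarith [sq_nonneg y]))

lemma bump_lt_one {y : ℝ} (hy : y ≠ 0) : bump y < 1 :=
  (bump_le_inv_one_add_sq y).trans_lt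
    (inv_lt_one_of_one_lt₀ (lt_add_of_pos_right 1 (by positivity)))

lemma abs_bump_le_one (y : ℝ) : |bump y| ≤ 1 := by
  rw [abs_of_pos (bump_pos y)]
  exact (bump_le_inv_one_add_sq y).trans
    (inv_le_one_of_one_le₀ (le_add_of_nonneg_right (sq_nonneg y)))

lemma integrable_bump : Integrable bump :=
  integrable_inv_one_add_sq.mono' continuous_bump.aestronglyMeasurable
    (.of_forall fun y => by
      rw [Real.norm_of_nonneg (bump_pos y).le]
      exact bump_le_inv_one_add_sq y)

lemma convDefect_bump_zero_ne_zero {ν : Measure ℝ} [IsProbabilityMeasure ν]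
    (hν : ν ≠ .dirac 0) : convDefect ν bump 0 ≠ 0 := by
  have hbm := continuous_bump.measurable
  have hi : Integrable (fun x => bump (0 - x)) ν :=
    .of_bound (Measurable.aestronglyMeasurable (by fun_prop)) 1 (.of_forall fun x =>
      abs_bump_le_one _)
  have hdefect : convDefect ν bump 0 = ∫ x, (1 - bump (0 - x)) ∂ν := by
    rw [integral_sub (integrable_const _) hi]
    simp [convDefect, bump_zero]
  rw [hdefect, Ne, integral_eq_zero_iff_of_nonneg
    (fun x => sub_nonneg.2 ((le_abs_self _).trans (abs_bump_le_one _)))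
    ((integrable_const _).sub hi)]
  contrapose! hν
  have hzero : id =ᵐ[ν] fun _ => (0 : ℝ) := hν.mono fun x hx => by
    by_contra hx0
    exact (bump_lt_one (sub_ne_zero.2 (Ne.symm hx0))).ne (sub_eq_zero.1 hx).symm
  simpa using Measure.map_congr hzero

end Bump

section Tail

variable {α : Type*} [MeasurableSpace α] {μ : Measure α}

lemma abs_div_one_add_sq_le (a : ℝ) : |a / (1 + a ^ 2)| ≤ 1 / 2 := by
  rw [abs_div, abs_of_pos (by positivity : 0 < 1 + a ^ 2), div_le_iff₀ (by positivity)]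
  nlinarith [sq_nonneg (|a| - 1), sq_abs a]

lemma mul_sq_sub_le_mul_div_one_add_sq {ε : ℝ} (hε : 0 ≤ ε) (a : ℝ) :
    ε * a ^ 2 - ε ^ 3 * a ^ 4 ≤ a * (ε * a / (1 + (ε * a) ^ 2)) := by
  rw [mul_div_assoc', le_div_iff₀ (by positivity)]
  have : 0 ≤ ε ^ 5 * a ^ 6 := by positivity
  linarith

lemma mul_integral_sq_sub_le_integral_mul_div {A : α → ℝ} {K ε : ℝ} (hA : Integrable A μ)
    (hAK : ∀ x, |A x| ≤ K) (hε : 0 ≤ ε) :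
    ε * ∫ x, A x ^ 2 ∂μ - ε ^ 3 * ∫ x, A x ^ 4 ∂μ
      ≤ ∫ x, A x * (ε * A x / (1 + (ε * A x) ^ 2)) ∂μ := by
  have hpow (n : ℕ) : Integrable (fun x => A x ^ (n + 1)) μ := by
    simp_rw [pow_succ']
    refine hA.mul_bdd (c := K ^ n) (hA.aestronglyMeasurable.pow n) (.of_forall fun x => ?_)
    rw [norm_pow]
    exact pow_le_pow_left₀ (norm_nonneg _) (hAK x) n
  have hdiv : Measurable fun a : ℝ => ε * a / (1 + (ε * a) ^ 2) := by fun_prop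
  rw [← integral_const_mul, ← integral_const_mul,
    ← integral_sub ((hpow 1).const_mul ε) ((hpow 3).const_mul _)]
  exact integral_mono (((hpow 1).const_mul ε).sub ((hpow 3).const_mul _))
    (hA.mul_bdd (hdiv.comp_aemeasurable hA.aemeasurable).aestronglyMeasurable
      (.of_forall fun x => abs_div_one_add_sq_le _))
    fun x => mul_sq_sub_le_mul_div_one_add_sq hε (A x)

lemma min_le_rpow_mul_rpow {x t p : ℝ} (hx : 0 ≤ x) (ht : 0 < t) (hp0 : 0 ≤ p) (hp1 : p ≤ 1) :
    min x t ≤ x ^ p * t ^ (1 - p) := by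
  have hmin : 0 ≤ min x t := le_min hx ht.le
  calc min x t = min x t ^ p * min x t ^ (1 - p) := by
        rw [← Real.rpow_add_of_nonneg hmin hp0 (sub_nonneg.2 hp1), add_sub_cancel, Real.rpow_one]
    _ ≤ x ^ p * t ^ (1 - p) := by
        gcongr
        exacts [min_le_left _ _, min_le_right _ _]

theorem lintegral_rpow_eq_top_of_le_integral_min {T : α → ℝ} {p κ : ℝ} (hT : AEMeasurable T μ)
    (hp0 : 0 ≤ p) (hp1 : p < 1) (hκ : 0 < κ)
    (hle : ∀ᶠ t in Filter.atTop, κ * t ^ (1 - p) ≤ ∫ x, min |T x| t ∂μ) :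
    ∫⁻ x, ENNReal.ofReal (|T x| ^ p) ∂μ = ⊤ := by
  have hTm : AEMeasurable (fun x => |T x|) μ := by fun_prop
  have hpm : AEMeasurable (fun x => |T x| ^ p) μ := hTm.pow_const p
  by_contra hfin
  have hint : Integrable (fun x => |T x| ^ p) μ :=
    (lintegral_ofReal_ne_top_iff_integrable hpm.aestronglyMeasurable
      (.of_forall fun x => by positivity)).1 hfin
  have hlim : Filter.Tendsto (fun t => ∫ x, min |T x| t * t ^ (-(1 - p)) ∂μ) Filter.atTop
      (nhds (∫ _, 0 ∂μ)) := by
    refine tendsto_integral_filter_of_dominated_convergence (fun x => |T x| ^ p)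
      (.of_forall fun t => ((hTm.min aemeasurable_const).mul_const _).aestronglyMeasurable)
      ?_ hint (.of_forall fun x => ?_)
    · filter_upwards [Filter.eventually_gt_atTop 0] with t ht
      refine .of_forall fun x => ?_
      rw [Real.norm_of_nonneg (by positivity), Real.rpow_neg ht.le, ← div_eq_mul_inv,
        div_le_iff₀ (by positivity)]
      exact min_le_rpow_mul_rpow (abs_nonneg _) ht hp0 hp1.le
    · have h0 := (tendsto_rpow_neg_atTop (sub_pos.2 hp1)).const_mul |T x|
      rw [mul_zero] at h0
      refine h0.congr' ?_
      filter_upwards [Filter.eventually_ge_atTop |T x|] with t ht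
      rw [min_eq_left ht]
  rw [integral_zero] at hlim
  refine hκ.not_ge (ge_of_tendsto hlim ?_)
  filter_upwards [hle, Filter.eventually_gt_atTop 0] with t ht ht0
  rwa [integral_mul_const, Real.rpow_neg ht0.le, ← div_eq_mul_inv, le_div_iff₀ (by positivity)]

end Tail

section PathSpace

variable {μ : Measure C(ℝ, ℝ)} {ν : Measure ℝ} {τ : C(ℝ, ℝ) → ℝ} {h : ℝ → ℝ} {C L : ℝ}

theorem exists_mul_rpow_le_integral_additiveFunctional_mul (hμ : IsTwoSidedBM μ fun t w => w t)
    (hh : Continuous h) (hC : ∀ y, |h y| ≤ C) (hi : Integrable h)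
    (hL : ∀ e ≥ 0, ∀ y, |∫ r in 0..e, heatSemigroup r h y| ≤ L) {y : ℝ} (hy : h y ≠ 0) :
    ∃ κ > 0, ∀ t ≥ 2, ∃ ε, κ * t ^ (1 - (1 : ℝ) / 4) ≤ ∫ w, additiveFunctional h 0 t w
      * (ε * additiveFunctional h 0 t w / (1 + (ε * additiveFunctional h 0 t w) ^ 2))
      ∂lebesgueStart μ := by
  obtain ⟨c, hc, hsq⟩ := exists_mul_le_integral_additiveFunctional_sq hμ hh hC hi hy
  let M : ℝ := 48 * (L ^ 2 * (∫ y, |h y|) ^ 2)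
  have : 0 ≤ M := by positivity
  let δ : ℝ := √(c / (2 * (M + 1)))
  have hδ : 0 < δ := by positivity
  have hδM : δ ^ 2 * M ≤ c / 2 := by
    rw [Real.sq_sqrt (by positivity), div_mul_eq_mul_div, div_le_div_iff₀ (by positivity) two_pos]
    nlinarith
  refine ⟨δ * (c / 2), by positivity, fun t ht => ?_⟩
  have ht0 : 0 < t := by linarith
  set s := t ^ (1 / 4 : ℝ) with hs
  have hs0 : 0 < s := by positivity
  have hst : s ^ 4 = t := by
    rw [hs, ← Real.rpow_natCast, ← Real.rpow_mul ht0.le]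
    norm_num
  have hpow : t ^ (1 - (1 : ℝ) / 4) = s ^ 3 := by
    rw [hs, ← Real.rpow_natCast, ← Real.rpow_mul ht0.le]
    norm_num
  have hsqrt : √t = s ^ 2 := by
    rw [← hst, show s ^ 4 = (s ^ 2) ^ 2 by ring, Real.sqrt_sq (by positivity)]
  refine ⟨δ / s, le_trans ?_ (mul_integral_sq_sub_le_integral_mul_div
    (integrable_additiveFunctional hμ hi 0 t) (abs_additiveFunctional_le hC 0 t)
    (by positivity))⟩
  have hfour := integral_additiveFunctional_pow_four_le hμ hh hC hi hL ht0.le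
  calc δ * (c / 2) * t ^ (1 - (1 : ℝ) / 4) ≤ δ * (c - δ ^ 2 * M) * s ^ 3 := by
        rw [hpow]
        gcongr
        linarith
    _ = δ / s * (c * t) - (δ / s) ^ 3 * (M * (t * √t)) := by
        rw [hsqrt, ← hst]
        field_simp
    _ ≤ _ := by
        gcongr
        exact hsq t ht

theorem lintegral_abs_rpow_quarter_eq_top_of_path (hμ : IsTwoSidedBM μ fun t w => w t)
    [IsProbabilityMeasure ν] (hν : ν ≠ .dirac 0) (hνi : Integrable (fun x => x) ν)
    (hτ : Measurable τ)
    (hτμ : μ.map (fun w => (w (τ w), incrementPath (τ w) w)) = ν.prod μ) :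
    ∫⁻ w, ENNReal.ofReal (|τ w| ^ ((1 : ℝ) / 4)) ∂μ = ⊤ := by
  have hbm := continuous_bump.measurable
  have hdm : Measurable (convDefect ν bump) := measurable_convDefect hbm
  obtain ⟨L, hL⟩ := exists_abs_integral_heatSemigroup_convDefect_le hνi
    hasDerivAt_sqrt_one_add_sq hasDerivAt_div_sqrt_one_add_sq continuous_bump
    abs_div_sqrt_one_add_sq_le abs_bump_le_one
  obtain ⟨κ, hκ, hlower⟩ := exists_mul_rpow_le_integral_additiveFunctional_mul hμ
    (continuous_convDefect continuous_bump abs_bump_le_one) (abs_convDefect_le abs_bump_le_one)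
    (integrable_convDefect integrable_bump) hL (convDefect_bump_zero_ne_zero hν)
  have hI : 0 < ∫ y, |bump y| := integral_pos_of_integrable_nonneg_nonzero (x := 0)
    continuous_bump.abs integrable_bump.abs (fun y => abs_nonneg _) (abs_pos.2 (bump_pos 0).ne').ne'
  refine lintegral_rpow_eq_top_of_le_integral_min (κ := κ / ∫ y, |bump y|) hτ.aemeasurable
    (by norm_num) (by norm_num) (by positivity) ?_
  filter_upwards [Filter.eventually_ge_atTop 2] with t ht
  obtain ⟨ε, hε⟩ := hlower t ht
  have hupper := abs_integral_additiveFunctional_mul_le hμ hτ hτμ integrable_bump hbm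
    (Φ := fun w => ε * additiveFunctional (convDefect ν bump) 0 t w
      / (1 + (ε * additiveFunctional (convDefect ν bump) 0 t w) ^ 2)) (by fun_prop)
    (fun w => abs_div_one_add_sq_le _) (zero_le_two.trans ht)
  rw [div_mul_eq_mul_div, div_le_iff₀ hI]
  linarith [hε.trans ((le_abs_self _).trans hupper)]

end PathSpace

section UnbiasedShift

variable {Ω : Type*} [MeasurableSpace Ω] {P : Measure Ω} {B : ℝ → Ω → ℝ} {T : Ω → ℝ}

theorem IsUnbiasedShift.exists_map_path_eq_prod (hT : IsUnbiasedShift P B T)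
    (hB : IsTwoSidedBM P B) {X : Ω → C(ℝ, ℝ)} (hX : Measurable X)
    (hXB : ∀ᵐ ω ∂P, ∀ t, X ω t = B t ω) :
    ∃ τ : C(ℝ, ℝ) → ℝ, Measurable τ ∧ (∀ᵐ ω ∂P, T ω = τ (X ω)) ∧
      (P.map X).map (fun w => (w (τ w), incrementPath (τ w) w))
        = (P.map fun ω => B (T ω) ω).prod (P.map X) := by
  have := hB.isProbabilityMeasure
  obtain ⟨hTr, hTB, hTi⟩ := hT
  obtain ⟨g, hg, hgT⟩ := hTr.exists_eq_measurable_comp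
  let τ (w : C(ℝ, ℝ)) : ℝ := g w
  have hτ : Measurable τ := hg.comp measurable_coe_path
  have hTτ : ∀ᵐ ω ∂P, T ω = τ (X ω) := by
    filter_upwards [hXB] with ω h
    rw [hgT]
    exact congrArg g (funext fun t => (h t).symm)
  refine ⟨τ, hτ, hTτ, ?_⟩
  have hval : (fun ω => B (T ω) ω) =ᵐ[P] fun ω => X ω (τ (X ω)) := by
    filter_upwards [hXB, hTτ] with ω h hω
    rw [hω, h]
  have hincr : ∀ᵐ ω ∂P, ∀ t, B (T ω + t) ω - B (T ω) ω = incrementPath (τ (X ω)) (X ω) t := by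
    filter_upwards [hXB, hTτ] with ω h hω t
    rw [hω, incrementPath_apply, h, h]
  have hlaw : P.map (fun ω => incrementPath (τ (X ω)) (X ω)) = P.map X :=
    (hTB.congr hincr).map_path_eq (by fun_prop) hX
      (hB.congr (hXB.mono fun ω h t => (h t).symm))
  have hind : IndepFun (fun ω => X ω (τ (X ω))) (fun ω => incrementPath (τ (X ω)) (X ω)) P := by
    have h := (hTi.congr (hincr.mono fun ω h => funext h) hval).symm
    rw [IndepFun_iff_Indep] at h ⊢
    simpa only [pathMeasurableSpace, MeasurableSpace.comap_comp, Function.comp_def] using! h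
  rw [Measure.map_map (by fun_prop) hX, Measure.map_congr hval, ← hlaw]
  exact (indepFun_iff_map_prod_eq_prod_map_map (by fun_prop) (by fun_prop)).1 hind

theorem unbiased_stopping_time_quarter_moment_infinite_general (hB : IsTwoSidedBM P B)
    {ν : Measure ℝ} [IsProbabilityMeasure ν] (hν : ν ≠ .dirac 0)
    (hνmom : ∫⁻ x, ENNReal.ofReal |x| ∂ν < ⊤) (hT : IsUnbiasedShift P B T) (hTν : Embeds P B T ν) :
    ∫⁻ ω, ENNReal.ofReal (|T ω| ^ ((1 : ℝ) / 4)) ∂P = ⊤ := by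
  have hνi : Integrable (fun x => x) ν :=
    (hasFiniteIntegral_iff_norm _).2 hνmom |> .intro aestronglyMeasurable_id
  obtain ⟨X, hX, hXB⟩ := exists_measurable_path_version hB.aemeas hB.cont
  have hμ := (hB.congr (hXB.mono fun ω h t => (h t).symm)).map_path hX
  obtain ⟨τ, hτ, hTτ, hτμ⟩ := hT.exists_map_path_eq_prod hB hX hXB
  rw [hTν] at hτμ
  have hmain := lintegral_abs_rpow_quarter_eq_top_of_path hμ hν hνi hτ hτμ
  rw [lintegral_map (by fun_prop) hX] at hmain
  rw [← hmain]
  exact lintegral_congr_ae (hTτ.mono fun ω h => by simp only [h])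

end UnbiasedShift

/-- if `ν({0}) = 0`, `∫|x| ν(dx) < ∞`, and `T ≥ 0` is a stopping time which is
an unbiased shift embedding `ν`, then `E₀[T^{1/4}] = ∞`. -/
theorem unbiased_stopping_time_quarter_moment_infinite {Ω : Type*} [MeasurableSpace Ω]
    (P : Measure Ω) [IsProbabilityMeasure P]
    (B : ℝ → Ω → ℝ) (hB : IsTwoSidedBM P B)
    (ν : Measure ℝ) [IsProbabilityMeasure ν] (hν0 : ν {0} = 0)
    (hνmom : ∫⁻ x, ENNReal.ofReal |x| ∂ν < ⊤)
    (T : Ω → ℝ) (hT0 : ∀ ω, 0 ≤ T ω) (hTstop : IsBMStoppingTime B T)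
    (hT : IsUnbiasedShift P B T) (hTν : Embeds P B T ν) :
    ∫⁻ ω, ENNReal.ofReal (T ω ^ ((1 : ℝ) / 4)) ∂P = ⊤ := by
  simpa [abs_of_nonneg, hT0] using unbiased_stopping_time_quarter_moment_infinite_general hB
    (fun h => by simp [h] at hν0) hνmom hT hTν
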